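/- Let q be a prime power, let G = PSL(2, 𝔽_q) be the quotient of SL(2, 𝔽_q) by its center, let p be any prime, and let P be a Sylow p-subgroup of G. Then for every irreducible complex character χ of G, the restriction χ_P is a sum of characters of the form λ^P induced from irreducible characters λ of subgroups Q ≤ P with χ(1)_p = |P : Q|. -/

import Mathlib

open scoped Classical

/-- The induced character (as a class function formula): for `f` a function on a
subgroup `H` of a finite group `G`, `inducedChar H f g = (1/|H|) ∑_{x ∈ G, xgx⁻¹ ∈ H} f (xgx⁻¹)`. -/
noncomputable def inducedChar {G : Type*} [Group G] [Fintype G] (H : Subgroup G)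
    (f : H → ℂ) : G → ℂ :=
  fun g => (Fintype.card H : ℂ)⁻¹ *
    ∑ x : G, if h : x * g * x⁻¹ ∈ H then f ⟨x * g * x⁻¹, h⟩ else 0

/-- `χ` is the character of an irreducible complex representation of `G`. -/
def IsIrreducibleCharacter {G : Type} [Group G] (χ : G → ℂ) : Prop :=
  ∃ V : FDRep ℂ G, CategoryTheory.Simple V ∧ χ = FDRep.character V

/-- The restriction of `χ` (a character of degree `d` of the ambient group `G`) to the
subgroup `P` is a sum of characters `λ^P` induced from irreducible characters `λ` of
subgroups `Q ≤ P` satisfying `d_p = |P : Q|` (the `p`-part of the degree equals the index). -/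
def SumInducedProperty (p : ℕ) {G : Type} [Group G] [Fintype G] (P : Subgroup G)
    (χ : G → ℂ) (d : ℕ) : Prop :=
  ∃ (n : ℕ) (Q : Fin n → Subgroup ↥P) (lam : (i : Fin n) → ↥(Q i) → ℂ),
    (∀ i, IsIrreducibleCharacter (lam i)) ∧
    (∀ i, p ^ (d.factorization p) = (Q i).index) ∧
    (∀ x : ↥P, χ ↑x = ∑ i, inducedChar (Q i) (lam i) x)


namespace SFP
noncomputable section
set_option linter.unusedSectionVars false
variable {V : Type} [AddCommGroup V] [Module ℂ V] [FiniteDimensional ℂ V]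

abbrev tr : Module.End ℂ V →ₗ[ℂ] ℂ := LinearMap.trace ℂ V

lemma tr_idem (e : Module.End ℂ V) (he : e * e = e) : ∃ n : ℕ, tr e = n := by
  have h : LinearMap.IsProj (LinearMap.range e) e :=
    ⟨fun x => ⟨x, rfl⟩, by rintro _ ⟨y, rfl⟩; exact congrArg (fun f => f y) he⟩
  exact ⟨_, h.trace⟩

lemma eq_zero_of_tr (e : Module.End ℂ V) (he : e * e = e) (h : tr e = 0) : e = 0 :=
  (LinearMap.IsIdempotentElem.trace_eq_zero_iff (e := e) he).1 h

section abel
variable {A : Type} [AddCommGroup A] [Fintype A]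

def wt (r : AddChar A (Module.End ℂ V)) (ψ : AddChar A ℂ) : Module.End ℂ V :=
  (Fintype.card A : ℂ)⁻¹ • ∑ x, ψ (-x) • r x

lemma r_wt (r : AddChar A (Module.End ℂ V)) (ψ : AddChar A ℂ) (y : A) :
    r y * wt r ψ = ψ y • wt r ψ := by
  unfold wt
  rw [mul_smul_comm, Finset.mul_sum, smul_comm (ψ y)]
  congr 1
  rw [Finset.smul_sum]
  refine Fintype.sum_equiv (Equiv.addLeft y) (fun x => r y * ψ (-x) • r x)
    (fun x => ψ y • ψ (-x) • r x) fun (x : A) => ?_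
  rw [mul_smul_comm, ← r.map_add_eq_mul, smul_smul, ← ψ.map_add_eq_mul]
  simp

lemma wt_r (r : AddChar A (Module.End ℂ V)) (ψ : AddChar A ℂ) (y : A) :
    wt r ψ * r y = ψ y • wt r ψ := by
  rw [← r_wt]
  unfold wt
  rw [mul_smul_comm, smul_mul_assoc, Finset.mul_sum, Finset.sum_mul]
  congr 1
  refine Finset.sum_congr rfl fun x _ => ?_
  rw [mul_smul_comm, smul_mul_assoc, ← r.map_add_eq_mul, ← r.map_add_eq_mul, add_comm]

lemma wt_mul_wt (r : AddChar A (Module.End ℂ V)) (ψ φ : AddChar A ℂ) :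
    wt r ψ * wt r φ = if ψ = φ then wt r φ else 0 := by
  have h : wt r ψ * wt r φ = ((Fintype.card A : ℂ)⁻¹ * ∑ x, (φ - ψ) x) • wt r φ := by
    conv_lhs => unfold wt
    rw [smul_mul_assoc, Finset.sum_mul, mul_smul, Finset.sum_smul]
    congr 1
    refine Finset.sum_congr rfl fun x _ => ?_
    change ψ (-x) • r x * wt r φ = _
    rw [smul_mul_assoc, r_wt, smul_smul, AddChar.sub_apply, mul_comm]
  rw [h, AddChar.sum_eq_ite]
  have : (Fintype.card A : ℂ) ≠ 0 := by simp
  by_cases hh : ψ = φ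
  · subst hh; simp [this]
  · have : φ - ψ ≠ 0 := fun h => hh (sub_eq_zero.1 h).symm
    simp [hh, this]

lemma sum_dual (x : A) : ∑ ψ : AddChar A ℂ, ψ x = if x = 0 then (Fintype.card A : ℂ) else 0 := by
  have := AddChar.sum_eq_ite (R := ℂ) (AddChar.doubleDualEmb x : AddChar (AddChar A ℂ) ℂ)
  simpa [AddChar.card_eq] using this

lemma sum_wt (r : AddChar A (Module.End ℂ V)) : ∑ ψ, wt r ψ = 1 := by
  unfold wt
  rw [← Finset.smul_sum, Finset.sum_comm]
  have : ∀ x : A, ∑ ψ : AddChar A ℂ, ψ (-x) • r x =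
      if x = 0 then (Fintype.card A : ℂ) • (1 : Module.End ℂ V) else 0 := by
    intro x
    rw [← Finset.sum_smul, sum_dual]
    by_cases h : x = 0 <;> simp [h]
  simp only [this]
  simp

/-- multiplicities of characters of an abelian group on the image of a commuting idempotent -/
lemma exists_mult (r : AddChar A (Module.End ℂ V)) (E : Module.End ℂ V) (hE : E * E = E)
    (hc : ∀ x, r x * E = E * r x) :
    ∃ m : AddChar A ℂ → ℕ, (∀ ψ, (m ψ : ℂ) = tr (wt r ψ * E)) ∧
      ∀ x, tr (r x * E) = ∑ ψ, (m ψ : ℂ) * ψ x := by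
  have hw : ∀ ψ, wt r ψ * E = E * wt r ψ := by
    intro ψ
    unfold wt
    rw [mul_smul_comm, smul_mul_assoc, Finset.mul_sum, Finset.sum_mul]
    congr 1
    refine Finset.sum_congr rfl fun x _ => ?_
    rw [mul_smul_comm, smul_mul_assoc, hc]
  have h : ∀ ψ, ∃ n : ℕ, tr (wt r ψ * E) = n := by
    intro ψ
    apply tr_idem
    rw [mul_assoc, ← mul_assoc E, ← hw, mul_assoc, hE, ← mul_assoc, wt_mul_wt]
    simp
  choose m hm using h
  refine ⟨m, fun ψ => (hm ψ).symm, fun x => ?_⟩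
  have : r x * E = ∑ ψ, ψ x • (wt r ψ * E) := by
    conv_lhs => rw [← mul_one (r x), ← sum_wt r, Finset.mul_sum, Finset.sum_mul]
    simp only [r_wt, smul_mul_assoc]
  rw [this, map_sum]
  refine Finset.sum_congr rfl fun ψ _ => ?_
  rw [map_smul, ← hm, smul_eq_mul, mul_comm]

lemma parseval (m : AddChar A ℂ → ℕ) :
    ∑ x, ‖∑ ψ, (m ψ : ℂ) * ψ x‖ ^ 2 = Fintype.card A * ∑ ψ, (m ψ : ℝ) ^ 2 := by
  have key : (∑ x, ((‖∑ ψ, (m ψ : ℂ) * ψ x‖ : ℂ)) ^ 2) = Fintype.card A * ∑ ψ, (m ψ : ℂ) ^ 2 := by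
    have : ∀ x : A, ((‖∑ ψ : AddChar A ℂ, (m ψ : ℂ) * ψ x‖ : ℂ)) ^ 2 =
        ∑ ψ : AddChar A ℂ, ∑ φ : AddChar A ℂ, (m ψ : ℂ) * m φ * (φ - ψ) x := by
      intro x
      rw [← Complex.conj_mul', map_sum, Finset.sum_mul_sum]
      refine Finset.sum_congr rfl fun ψ _ => Finset.sum_congr rfl fun φ _ => ?_
      rw [AddChar.sub_apply, map_mul, ← AddChar.map_neg_eq_conj]
      simp; ring
    simp only [this]
    rw [Finset.sum_comm]
    rw [Finset.mul_sum]
    refine Finset.sum_congr rfl fun ψ _ => ?_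
    rw [Finset.sum_comm]
    simp only [← Finset.mul_sum, AddChar.sum_eq_ite, sub_eq_zero]
    simp; ring
  exact_mod_cast key

lemma norm_le_mult (m : AddChar A ℂ → ℕ) (x : A) :
    ‖∑ ψ, (m ψ : ℂ) * ψ x‖ ≤ ∑ ψ, (m ψ : ℝ) := by
  refine (norm_sum_le _ _).trans (Finset.sum_le_sum fun ψ _ => ?_)
  simp
end abel

/-- a homomorphism from an abelian group as an additive character -/
def toAdd {B : Type} [CommGroup B] (f : B →* Module.End ℂ V) :
    AddChar (Additive B) (Module.End ℂ V) :=
  ⟨fun x => f x.toMul, by simp, by simp⟩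

lemma tr_inv {G : Type} [Group G] [Finite G] (ρ : Representation ℂ G V) (g : G) :
    tr (ρ g⁻¹) = (starRingEnd ℂ) (tr (ρ g)) := by
  let _ : CommGroup (Subgroup.zpowers g) := { (inferInstance : Group (Subgroup.zpowers g)) with
    mul_comm := fun a b => by
      obtain ⟨_, i, rfl⟩ := a
      obtain ⟨_, j, rfl⟩ := b
      ext
      exact (zpow_mul_comm g i j) }
  have : Fintype (Subgroup.zpowers g) := Fintype.ofFinite _
  have : Fintype (Additive (Subgroup.zpowers g)) := inferInstanceAs (Fintype (Subgroup.zpowers g))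
  let r := toAdd (B := Subgroup.zpowers g) (MonoidHom.comp ρ (Subgroup.zpowers g).subtype)
  obtain ⟨m, -, hm⟩ := exists_mult r 1 (by simp) (by simp)
  have h1 : ρ g = r (Additive.ofMul ⟨g, Subgroup.mem_zpowers g⟩) * 1 := by simp [r, toAdd]
  have h2 : ρ g⁻¹ = r (-Additive.ofMul ⟨g, Subgroup.mem_zpowers g⟩) * 1 := by
    simp [r, toAdd]
  rw [h1, h2, hm, hm, map_sum]
  refine Finset.sum_congr rfl fun ψ _ => ?_
  rw [map_mul, ← AddChar.map_neg_eq_conj]; simp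

lemma mult_hom {G : Type} [Group G] [Fintype G] (ρ : Representation ℂ G V) (Λ : G →* ℂˣ) :
    ∃ n : ℕ, ∑ g, tr (ρ g) * (Λ g⁻¹ : ℂ) = Fintype.card G * (n : ℂ) := by
  let σ : Representation ℂ G V :=
    { toFun := fun g => (Λ g⁻¹ : ℂ) • ρ g
      map_one' := by simp
      map_mul' := by
        intro a b
        rw [smul_mul_smul_comm, map_mul]
        congr 1
        simp [mul_comm] }
  have : Invertible (Nat.card G : ℂ) := invertibleOfNonzero (by simp)
  have h := Representation.card_inv_mul_sum_char_eq_finrank (ρ := σ)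
  refine ⟨Module.finrank ℂ σ.invariants, ?_⟩
  rw [← h, ← mul_assoc, Nat.card_eq_fintype_card, mul_inv_cancel₀ (by simp), one_mul]
  refine Finset.sum_congr rfl fun g _ => ?_
  simp [Representation.character, σ, mul_comm]

section schur
variable {G : Type} [Group G] [Fintype G] (ρ : Representation ℂ G V)

def NormOne : Prop := ∑ g, tr (ρ g) * tr (ρ g⁻¹) = Fintype.card G

variable {ρ}
lemma NormOne.scalar (h : NormOne ρ) (X : Module.End ℂ V) (hX : ∀ g, ρ g * X = X * ρ g) :
    ∃ c : ℂ, X = c • 1 := by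
  have : Invertible (Nat.card G : ℂ) := invertibleOfNonzero (by simp)
  have h1 := Representation.card_inv_mul_sum_char_mul_char_eq_finrank (ρ := ρ) (σ := ρ)
  have h2 : Module.finrank ℂ (Representation.IntertwiningMap ρ ρ) = 1 := by
    have : (∑ g, ρ.character g * ρ.character g⁻¹ : ℂ) = Fintype.card G := h
    rw [this] at h1
    rw [Nat.card_eq_fintype_card, inv_mul_cancel₀ (by simp)] at h1
    exact_mod_cast h1.symm
  have h3 := finrank_eq_one_iff_of_nonzero' (K := ℂ) (Representation.IntertwiningMap.id ρ) (by
    intro h0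
    have h0' : (Representation.IntertwiningMap.id ρ).toLinearMap = 0 := by rw [h0]; rfl
    have : ∀ v : V, v = 0 := fun v => congrArg (fun f => f v) h0'
    have hs : Subsingleton V := ⟨fun a b => by rw [this a, this b]⟩
    have : ∀ g, tr (ρ g) = 0 := fun g => by
      rw [Subsingleton.elim (ρ g) 0, map_zero]
    unfold NormOne at h
    simp only [this, mul_zero, Finset.sum_const_zero] at h
    exact absurd h.symm (by simp))
  obtain ⟨c, hc⟩ := h3.1 h2 (LinearMap.intertwiningMap_of_isIntertwiningMap ρ ρ X (fun g v =>
    (congrArg (fun f => f v) (hX g)).symm))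
  exact ⟨c, (congrArg (fun f => f.toLinearMap) hc).symm⟩

lemma NormOne.d_ne (h : NormOne ρ) : (Module.finrank ℂ V : ℂ) ≠ 0 := by
  intro h0
  have h0 : Module.finrank ℂ V = 0 := by exact_mod_cast h0
  have hs : Subsingleton V := Module.finrank_zero_iff.1 h0
  have : ∀ g, tr (ρ g) = 0 := fun g => by
    rw [Subsingleton.elim (ρ g) 0, map_zero]
  unfold NormOne at h
  simp only [this, mul_zero, Finset.sum_const_zero] at h
  exact absurd h.symm (by simp)

lemma NormOne.scalar' (h : NormOne ρ) (X : Module.End ℂ V) (hX : ∀ g, ρ g * X = X * ρ g) :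
    X = (tr X / Module.finrank ℂ V) • 1 := by
  obtain ⟨c, rfl⟩ := h.scalar X hX
  have := h.d_ne
  simp [this]

lemma NormOne.avg (h : NormOne ρ) (X : Module.End ℂ V) :
    ∑ g, ρ g * X * ρ g⁻¹ = (Fintype.card G * tr X / Module.finrank ℂ V) • 1 := by
  rw [h.scalar' (∑ g, ρ g * X * ρ g⁻¹)]
  · congr 2
    rw [map_sum]
    have : ∀ g, tr (ρ g * X * ρ g⁻¹) = tr X := by
      intro g
      rw [LinearMap.trace_mul_comm, ← mul_assoc, ← map_mul]
      simp
    simp [this]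
  · intro k
    rw [Finset.mul_sum, Finset.sum_mul]
    refine Fintype.sum_equiv (Equiv.mulLeft k) _ _ fun (x : G) => ?_
    simp [mul_assoc, ← map_mul]
    rw [map_mul, mul_assoc]

lemma NormOne.proj (h : NormOne ρ) :
    ∑ g, tr (ρ g) • ρ g⁻¹ = ((Fintype.card G : ℂ) / Module.finrank ℂ V) • 1 := by
  rw [h.scalar' (∑ g, tr (ρ g) • ρ g⁻¹)]
  · congr 2
    rw [map_sum]
    unfold NormOne at h
    simpa using h
  · intro k
    rw [Finset.mul_sum, Finset.sum_mul]
    refine Fintype.sum_equiv (MulAut.conj k).toEquiv _ _ fun (x : G) => ?_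
    have : tr (ρ (k * x * k⁻¹)) = tr (ρ x) := Representation.char_conj ρ x k
    simp [-map_mul, this]
    simp [mul_assoc, ← map_mul]
end schur

end
end SFP

namespace SFP
noncomputable section
set_option linter.unusedSectionVars false
variable {V : Type} [AddCommGroup V] [Module ℂ V] [FiniteDimensional ℂ V]

section sl
variable {F : Type} [Field F]

abbrev SL2 (F : Type) [Field F] := Matrix.SpecialLinearGroup (Fin 2) F

def mk (a b c d : F) (h : a * d - b * c = 1) : SL2 F :=
  ⟨!![a, b; c, d], by rw [Matrix.det_fin_two_of]; exact h⟩

def A' (g : SL2 F) : F := g.1 0 0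
def B' (g : SL2 F) : F := g.1 0 1
def C' (g : SL2 F) : F := g.1 1 0
def D' (g : SL2 F) : F := g.1 1 1

lemma dt (g : SL2 F) : A' g * D' g - B' g * C' g = 1 := by
  have := g.2
  rw [Matrix.det_fin_two] at this
  exact this

lemma ext4 {g h : SL2 F} (h1 : A' g = A' h) (h2 : B' g = B' h) (h3 : C' g = C' h)
    (h4 : D' g = D' h) : g = h := by
  apply Subtype.ext
  ext i j
  fin_cases i <;> fin_cases j <;> assumption

section
variable (a b c d : F) (h : a * d - b * c = 1) (g k : SL2 F)
@[simp] lemma A_mk : A' (mk a b c d h) = a := rfl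
@[simp] lemma B_mk : B' (mk a b c d h) = b := rfl
@[simp] lemma C_mk : C' (mk a b c d h) = c := rfl
@[simp] lemma D_mk : D' (mk a b c d h) = d := rfl
@[simp] lemma A_one : A' (1 : SL2 F) = 1 := rfl
@[simp] lemma B_one : B' (1 : SL2 F) = 0 := rfl
@[simp] lemma C_one : C' (1 : SL2 F) = 0 := rfl
@[simp] lemma D_one : D' (1 : SL2 F) = 1 := rfl
@[simp] lemma A_mul : A' (g * k) = A' g * A' k + B' g * C' k := by
  simp [A', B', C', Matrix.mul_apply, Fin.sum_univ_two]
@[simp] lemma B_mul : B' (g * k) = A' g * B' k + B' g * D' k := by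
  simp [A', B', D', Matrix.mul_apply, Fin.sum_univ_two]
@[simp] lemma C_mul : C' (g * k) = C' g * A' k + D' g * C' k := by
  simp [A', D', C', Matrix.mul_apply, Fin.sum_univ_two]
@[simp] lemma D_mul : D' (g * k) = C' g * B' k + D' g * D' k := by
  simp [D', B', C', Matrix.mul_apply, Fin.sum_univ_two]
@[simp] lemma A_inv : A' g⁻¹ = D' g := by
  simp [A', D', Matrix.SpecialLinearGroup.SL2_inv_expl]
@[simp] lemma B_inv : B' g⁻¹ = - B' g := by
  simp [B', Matrix.SpecialLinearGroup.SL2_inv_expl]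
@[simp] lemma C_inv : C' g⁻¹ = - C' g := by
  simp [C', Matrix.SpecialLinearGroup.SL2_inv_expl]
@[simp] lemma D_inv : D' g⁻¹ = A' g := by
  simp [A', D', Matrix.SpecialLinearGroup.SL2_inv_expl]
end

def u (x : F) : SL2 F := mk 1 x 0 1 (by ring)
def t (a : Fˣ) : SL2 F := mk a 0 0 (a⁻¹ : Fˣ) (by simp)
def tau (g : SL2 F) : SL2 F := mk (D' g) (B' g) (C' g) (A' g) (by linear_combination dt g)

lemma u_add (x y : F) : u (x + y) = u x * u y := by
  apply ext4 <;> simp [u, add_comm]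
lemma u_zero : u (0 : F) = 1 := by
  apply ext4 <;> simp [u]
lemma u_neg (x : F) : u (-x) = (u x)⁻¹ := by
  apply ext4 <;> simp [u]
lemma t_mul (a b : Fˣ) : t (a * b) = t a * t b := by
  apply ext4 <;> simp [t, mul_comm]
lemma t_one : t (1 : Fˣ) = 1 := by
  apply ext4 <;> simp [t]
lemma t_inv (a : Fˣ) : t (a⁻¹) = (t a)⁻¹ := by
  apply ext4 <;> simp [t]

lemma tau_mul (g h : SL2 F) : tau (g * h) = tau h * tau g := by
  apply ext4 <;> simp [tau] <;> ring
lemma tau_u (x : F) : tau (u x) = u x := by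
  apply ext4 <;> simp [tau, u]

variable [Fintype F]

def ru (ρ : Representation ℂ (SL2 F) V) : AddChar F (Module.End ℂ V) :=
  ⟨fun x => ρ (u x), by simp [u_zero], fun a b => by rw [u_add, map_mul]⟩

@[simp] lemma ru_apply (ρ : Representation ℂ (SL2 F) V) (x : F) : ru ρ x = ρ (u x) := rfl

section hecke
variable (ρ : Representation ℂ (SL2 F) V) (ψ : AddChar F ℂ)

def hf (g : SL2 F) : Module.End ℂ V := wt (ru ρ) ψ * ρ g * wt (ru ρ) ψ

lemma E_idem : wt (ru ρ) ψ * wt (ru ρ) ψ = wt (ru ρ) ψ := by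
  rw [wt_mul_wt]; simp

lemma hf_ul (x : F) (g : SL2 F) : hf ρ ψ (u x * g) = ψ x • hf ρ ψ g := by
  unfold hf
  rw [map_mul, ← mul_assoc, ← ru_apply, wt_r]
  simp only [smul_mul_assoc]

lemma hf_ur (x : F) (g : SL2 F) : hf ρ ψ (g * u x) = ψ x • hf ρ ψ g := by
  unfold hf
  rw [map_mul, mul_assoc, mul_assoc (ρ g), ← ru_apply, r_wt]
  simp only [mul_smul_comm, mul_assoc]

variable {ψ}
lemma hf_zero (hψ : ψ ≠ 0) (g : SL2 F) (hc : C' g = 0) (had : A' g ≠ D' g) : hf ρ ψ g = 0 := by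
  have hd := dt g
  rw [hc] at hd
  have ha : A' g ≠ 0 := by intro h; simp [h] at hd
  obtain ⟨z, hz⟩ := AddChar.ne_zero_iff.1 hψ
  have h1 : A' g - D' g ≠ 0 := sub_ne_zero.2 had
  set x := A' g * z / (A' g - D' g) with hx
  have e : u x * g = g * u (x - z) := by
    apply ext4
    · simp [u, hc]
    · simp [u]
      rw [hx]
      field_simp
      ring
    · simp [u, hc]
    · simp [u, hc]
  have e2 := congrArg (hf ρ ψ) e
  rw [hf_ul, hf_ur, AddChar.map_sub_eq_div] at e2
  have hx0 : ψ x ≠ 0 := by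
    have := AddChar.norm_apply ψ x
    intro h; simp [h] at this
  have hz0 : ψ z ≠ 0 := by
    have := AddChar.norm_apply ψ z
    intro h; simp [h] at this
  rw [← sub_eq_zero, ← sub_smul, smul_eq_zero] at e2
  rcases e2 with e2 | e2
  · exfalso
    apply hz
    field_simp at e2
    rw [mul_zero] at e2
    exact sub_eq_zero.1 ((mul_eq_zero.1 e2).resolve_left hx0)
  · exact e2

lemma hf_tau (hψ : ψ ≠ 0) (g : SL2 F) : hf ρ ψ (tau g) = hf ρ ψ g := by
  by_cases hc : C' g = 0
  · by_cases had : A' g = D' g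
    · congr 1
      apply ext4 <;> simp [tau, had]
    · rw [hf_zero ρ hψ g hc had, hf_zero ρ hψ (tau g) (by simp [tau, hc]) (by simpa [tau] using Ne.symm had)]
  · set x := (D' g - A' g) / C' g with hx
    have : tau g = u x * (g * u (-x)) := by
      apply ext4
      · simp [tau, u, hx, hc]
      · simp [tau, u, hx]; field_simp; ring
      · simp [tau, u, hx]
      · simp [tau, u, hx]; field_simp; ring
    rw [this, hf_ul, hf_ur, smul_smul, ← AddChar.map_add_eq_mul]
    simp

lemma hf_mul (g h : SL2 F) : hf ρ ψ g * hf ρ ψ h =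
    (Fintype.card F : ℂ)⁻¹ • ∑ x, ψ (-x) • hf ρ ψ (g * u x * h) := by
  have : hf ρ ψ g * hf ρ ψ h = wt (ru ρ) ψ * ρ g * wt (ru ρ) ψ * ρ h * wt (ru ρ) ψ := by
    unfold hf
    calc _ = wt (ru ρ) ψ * ρ g * (wt (ru ρ) ψ * wt (ru ρ) ψ) * ρ h * wt (ru ρ) ψ := by
          simp only [mul_assoc]
      _ = _ := by rw [E_idem]
  rw [this]
  unfold hf
  conv_lhs =>
    enter [1, 1, 2]
    unfold wt
  simp only [mul_smul_comm, smul_mul_assoc, Finset.mul_sum, Finset.sum_mul, map_mul, mul_assoc,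
    ru_apply]

lemma hf_comm (hψ : ψ ≠ 0) (g h : SL2 F) : hf ρ ψ g * hf ρ ψ h = hf ρ ψ h * hf ρ ψ g := by
  rw [← hf_tau ρ hψ g, ← hf_tau ρ hψ h, hf_mul, hf_tau ρ hψ, hf_tau ρ hψ, hf_mul]
  congr 1
  refine Finset.sum_congr rfl fun x _ => ?_
  rw [← hf_tau ρ hψ (h * u x * g), tau_mul, tau_mul, tau_u, mul_assoc] 

lemma E_hf (g : SL2 F) : wt (ru ρ) ψ * hf ρ ψ g = hf ρ ψ g := by
  unfold hf; rw [← mul_assoc, ← mul_assoc, E_idem]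
lemma hf_E (g : SL2 F) : hf ρ ψ g * wt (ru ρ) ψ = hf ρ ψ g := by
  unfold hf; rw [mul_assoc, E_idem]

lemma NormOne.proj' {G : Type} [Group G] [Fintype G] {ρ : Representation ℂ G V} (h : NormOne ρ)
    (k : G) : ∑ g, tr (ρ k * ρ g) • ρ g⁻¹ =
      ((Fintype.card G : ℂ) / Module.finrank ℂ V) • ρ k := by
  have := congrArg (· * ρ k) h.proj
  simp only [smul_mul_assoc, one_mul, Finset.sum_mul] at this
  rw [← this]
  refine Fintype.sum_equiv (Equiv.mulLeft k) _ _ fun (x : G) => ?_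
  simp [mul_assoc, ← map_mul]

lemma hecke {ρ : Representation ℂ (SL2 F) V} (h1 : NormOne ρ) (hψ : ψ ≠ 0) :
    tr (wt (ru ρ) ψ) = 0 ∨ tr (wt (ru ρ) ψ) = 1 := by
  set E := wt (ru ρ) ψ with hE
  have hEE : E * E = E := E_idem ρ ψ
  set n := tr E with hn
  set c : ℂ := (Fintype.card (SL2 F) : ℂ) / Module.finrank ℂ V with hc
  have hc0 : c ≠ 0 := div_ne_zero (by simp) h1.d_ne
  have a1 : ∀ X : Module.End ℂ V, ∑ g, E * (ρ g * X * ρ g⁻¹) * E = (c * tr X) • E := by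
    intro X
    rw [← Finset.sum_mul, ← Finset.mul_sum, h1.avg]
    simp only [mul_smul_comm, smul_mul_assoc, mul_one, hEE]
    congr 1; rw [hc]; ring
  have a2 : ∑ g, hf ρ ψ g * hf ρ ψ g⁻¹ = (c * n) • E := by
    rw [hn, ← a1 E]
    refine Finset.sum_congr rfl fun g _ => ?_
    unfold hf
    rw [← hE]
    calc _ = E * ρ g * (E * E) * ρ g⁻¹ * E := by simp only [mul_assoc]
      _ = _ := by rw [hEE]; simp only [mul_assoc]
  have a3 : ∀ k, n • hf ρ ψ k = tr (hf ρ ψ k) • E := by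
    intro k
    have b1 := a1 (hf ρ ψ k)
    have b2 : ∑ g, E * (ρ g * hf ρ ψ k * ρ g⁻¹) * E = (c * n) • hf ρ ψ k := by
      have : ∀ g, E * (ρ g * hf ρ ψ k * ρ g⁻¹) * E = hf ρ ψ k * (hf ρ ψ g * hf ρ ψ g⁻¹) := by
        intro g
        rw [← mul_assoc (hf ρ ψ k), hf_comm ρ hψ k g]
        unfold hf
        rw [← hE]
        calc _ = E * ρ g * E * ρ k * E * ρ g⁻¹ * E := by simp only [mul_assoc]
          _ = E * ρ g * (E * E) * ρ k * (E * E) * ρ g⁻¹ * E := by rw [hEE]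
          _ = _ := by simp only [mul_assoc]
      simp only [this]
      rw [← Finset.mul_sum, a2, mul_smul_comm, hf_E]
    rw [b2, mul_smul, mul_smul] at b1
    exact smul_right_injective _ hc0 b1
  have a4 : ∑ k, tr (hf ρ ψ k) • hf ρ ψ k⁻¹ = c • E := by
    have b1 : ∑ k, tr (E * ρ k) • ρ k⁻¹ = c • E := by
      rw [hE]
      unfold wt
      simp only [smul_mul_assoc, Finset.sum_mul, map_smul, map_sum, smul_assoc, Finset.sum_smul]
      rw [← Finset.smul_sum, Finset.sum_comm, smul_comm c]
      congr 1
      rw [Finset.smul_sum]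
      refine Finset.sum_congr rfl fun x _ => ?_
      rw [← Finset.smul_sum, smul_comm c]
      congr 1
      exact h1.proj' _
    have b2 := congrArg (fun X => E * X * E) b1
    simp only [Finset.mul_sum, Finset.sum_mul, mul_smul_comm, smul_mul_assoc, hEE] at b2
    rw [← b2]
    refine Finset.sum_congr rfl fun k _ => ?_
    have : tr (hf ρ ψ k) = tr (E * ρ k) := by
      unfold hf
      rw [← hE, LinearMap.trace_mul_comm, ← mul_assoc, hEE]
    rw [this]; rfl
  have a5 : (n * (c * n)) • E = c • E := by
    rw [← a4, mul_smul, ← a2, Finset.smul_sum]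
    refine Finset.sum_congr rfl fun k _ => ?_
    rw [← smul_mul_assoc, a3, smul_mul_assoc, E_hf]
  have a6 := congrArg tr a5
  simp only [map_smul, smul_eq_mul] at a6
  rw [← hn] at a6
  have a7 : n * (n - 1) * (n + 1) = 0 := by
    apply mul_left_cancel₀ hc0
    linear_combination a6
  obtain ⟨m, hm⟩ := tr_idem E hEE
  rw [← hn] at hm
  rcases mul_eq_zero.1 a7 with h | h
  · rcases mul_eq_zero.1 h with h | h
    · left; exact h
    · right; exact sub_eq_zero.1 h
  · exfalso
    rw [hm] at h
    norm_cast at h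
end hecke
end sl
end
end SFP

namespace SFP
noncomputable section
set_option linter.unusedSectionVars false
variable {V : Type} [AddCommGroup V] [Module ℂ V] [FiniteDimensional ℂ V]
variable {F : Type} [Field F] [Fintype F]

def ep (F : Type) [Field F] : ℕ := if ringChar F = 2 then 1 else 2

lemma card_sq : (Finset.univ.filter fun a : Fˣ => a ^ 2 = 1).card = ep F := by
  have h : ∀ a : Fˣ, a ^ 2 = 1 ↔ a = 1 ∨ a = -1 := fun a => by
    rw [Units.ext_iff, Units.ext_iff, Units.ext_iff, Units.val_pow_eq_pow_val, Units.val_neg,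
      Units.val_one]
    exact sq_eq_one_iff
  by_cases hF : ringChar F = 2
  · have : CharP F 2 := ringChar.of_eq hF
    have : (-1 : Fˣ) = 1 := by ext; simp [CharTwo.neg_eq]
    have e : (Finset.univ.filter fun a : Fˣ => a ^ 2 = 1) = {1} := by
      ext a; simp [h, this]
    rw [e, Finset.card_singleton, ep, if_pos hF]
  · have : (1 : Fˣ) ≠ -1 := by
      intro h
      exact Ring.neg_one_ne_one_of_char_ne_two hF (by simpa using (congrArg Units.val h).symm)
    have e : (Finset.univ.filter fun a : Fˣ => a ^ 2 = 1) = {1, -1} := by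
      ext a; simp [h]
    rw [e, Finset.card_pair this, ep, if_neg hF]

lemma sq_class (n : Fˣ → ℕ) (hn : ∀ c a, n (c * a ^ 2) = n c) (h1 : ∀ c, n c ≤ 1) :
    ∃ s : ℕ, s ≤ ep F ∧ ep F * ∑ c, n c = s * (Fintype.card F - 1) ∧
      (s = ep F → ∀ c, n c = 1) := by
  have hcard : Fintype.card Fˣ = Fintype.card F - 1 := Fintype.card_units F
  by_cases hF : ringChar F = 2
  · have hc : ∀ c, n c = n 1 := by
      intro c
      obtain ⟨a, ha⟩ := FiniteField.isSquare_of_char_two hF (c : F)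
      have ha0 : a ≠ 0 := by rintro rfl; simp at ha
      rw [← hn 1 (Units.mk0 a ha0)]
      congr 1
      ext; simp [ha, sq]
    refine ⟨n 1, by simp [ep, hF, h1], ?_, ?_⟩
    · simp only [ep, hF, if_true, hc]
      simp [hcard, mul_comm]
    · intro h c
      rw [hc, h]; simp [ep, hF]
  · obtain ⟨b, hb⟩ := FiniteField.exists_nonsquare hF
    have hb0 : b ≠ 0 := by rintro rfl; simp at hb
    set b' := Units.mk0 b hb0
    have hsq : ∀ c d : Fˣ, IsSquare (c * d : F) → n c = n d := by
      rintro c d ⟨a, ha⟩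
      have ha0 : a ≠ 0 := by rintro rfl; simp at ha
      have : d * (Units.mk0 a ha0 * d⁻¹) ^ 2 = c := by
        ext
        simp
        field_simp
        rw [sq, ← ha]; field_simp
      rw [← this, hn]
    have hc : ∀ c, n c + n (c * b') = n 1 + n b' := by
      intro c
      by_cases hcs : IsSquare (c : F)
      · rw [hsq c 1 (by simpa using hcs), hsq (c * b') b']
        simp only [Units.val_mul]
        rw [mul_assoc]
        exact hcs.mul ⟨_, rfl⟩
      · have : IsSquare (c * b : F) := by
          rw [← quadraticChar_one_iff_isSquare (by simp [hb0]), map_mul,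
            quadraticChar_neg_one_iff_not_isSquare.2 hb,
            quadraticChar_neg_one_iff_not_isSquare.2 hcs]; simp
        rw [hsq c b' this, hsq (c * b') 1 (by simpa [b'] using this), add_comm]
    refine ⟨n 1 + n b', ?_, ?_, ?_⟩
    · simp only [ep, hF, if_false]
      have := h1 1; have := h1 b'; omega
    · simp only [ep, hF, if_false]
      have e : ∑ c, n (c * b') = ∑ c, n c := Equiv.sum_comp (Equiv.mulRight b') n
      have : ∑ c, (n c + n (c * b')) = ∑ c : Fˣ, (n 1 + n b') := Finset.sum_congr rfl fun c _ => hc c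
      rw [Finset.sum_add_distrib, e] at this
      rw [two_mul, this]; simp [hcard, mul_comm]
    · intro h c
      simp only [ep, hF, if_false] at h
      have := h1 1; have := h1 b'; have := h1 c; have := h1 (c * b'); have := hc c
      omega

lemma sum_units {M : Type} [AddCommMonoid M] (f : F → M) : ∑ c, f c = f 0 + ∑ c : Fˣ, f c := by
  rw [Fintype.sum_eq_add_sum_compl 0]
  congr 1
  refine (Finset.sum_bij (fun (c : Fˣ) _ => (c : F)) ?_ ?_ ?_ ?_).symm
  · intro a _; simp
  · intro a _ b _ h; exact Units.ext h
  · intro b hb; exact ⟨Units.mk0 b (by simpa using hb), by simp⟩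
  · intro a _; rfl

def rt (ρ : Representation ℂ (SL2 F) V) : AddChar (Additive Fˣ) (Module.End ℂ V) :=
  ⟨fun x => ρ (t x.toMul), by simp [t_one], fun a b => by rw [toMul_add, t_mul, map_mul]⟩

lemma tut (a : Fˣ) (x : F) : t a * u x = u (a ^ 2 * x) * t a := by
  apply ext4 <;> simp [t, u]
  field_simp

lemma weights {ρ : Representation ℂ (SL2 F) V} (h1 : NormOne ρ) :
    ∃ a s D : ℕ, Module.finrank ℂ V = a + D ∧ ep F * D = s * (Fintype.card F - 1) ∧ s ≤ ep F ∧
      (∑ x : F, ‖tr (ρ (u x))‖ ^ 2 = Fintype.card F * ((a : ℝ) ^ 2 + D)) ∧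
      (s = ep F → a = 1 → ∀ x : F, x ≠ 0 → tr (ρ (u x)) = 0) ∧
      ∃ m : AddChar (Additive Fˣ) ℂ → ℕ, ∑ ψ, m ψ = a ∧
        ∀ b : Fˣ, b ^ 2 ≠ 1 → tr (ρ (t b)) = ∑ ψ, (m ψ : ℂ) * ψ (Additive.ofMul b) := by
  obtain ⟨m, hm, hmx⟩ := exists_mult (ru ρ) 1 (by simp) (by simp)
  simp only [mul_one] at hm hmx
  have hnt : Nontrivial (AddChar F ℂ) := by
    rw [← Fintype.one_lt_card_iff_nontrivial, AddChar.card_eq]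
    exact Fintype.one_lt_card
  obtain ⟨ψ₀, hψ₀⟩ := exists_ne (0 : AddChar F ℂ)
  have hprim : ψ₀.IsPrimitive := AddChar.IsPrimitive.of_ne_one hψ₀
  have hbij : Function.Bijective (fun c : F => ψ₀.mulShift c) := by
    rw [Fintype.bijective_iff_injective_and_card]
    exact ⟨AddChar.to_mulShift_inj_of_isPrimitive hprim, AddChar.card_eq.symm⟩
  have hne : ∀ c : Fˣ, ψ₀.mulShift c ≠ 0 := by
    intro c h
    have : ψ₀.mulShift (c : F) = ψ₀.mulShift 0 := by rw [h]; simp; rfl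
    exact c.ne_zero (hbij.1 this)
  have hm1 : ∀ c : Fˣ, m (ψ₀.mulShift c) ≤ 1 := by
    intro c
    rcases hecke h1 (hne c) with h | h <;> rw [← hm] at h <;> norm_cast at h <;> omega
  have hsq : ∀ c a : Fˣ, m (ψ₀.mulShift ↑(c * a ^ 2)) = m (ψ₀.mulShift c) := by
    intro c a
    have : (m (ψ₀.mulShift ↑(c * a ^ 2)) : ℂ) = m (ψ₀.mulShift c) := by
      rw [hm, hm]
      unfold wt
      rw [map_smul, map_smul, map_sum, map_sum]
      congr 1
      have hinj : Function.Bijective (fun x : F => (a : F) ^ 2 * x) :=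
        mulLeft_bijective₀ _ (by simp)
      refine Fintype.sum_equiv (Equiv.ofBijective _ hinj) _ _ fun (x : F) => ?_
      simp only [map_smul, ru_apply, Equiv.ofBijective_apply, AddChar.mulShift_apply]
      have e : tr (ρ (u ((a : F) ^ 2 * x))) = tr (ρ (u x)) := by
        have : u ((a : F) ^ 2 * x) = t a * u x * (t a)⁻¹ := by rw [tut]; group
        rw [this]; exact Representation.char_conj ρ _ _
      rw [e]
      congr 2
      push_cast; ring
    exact_mod_cast this
  obtain ⟨s, hs, hsD, hs1⟩ := sq_class (fun c : Fˣ => m (ψ₀.mulShift c)) hsq hm1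
  have split : ∀ f : AddChar F ℂ → ℕ, ∑ ψ, f ψ = f 0 + ∑ c : Fˣ, f (ψ₀.mulShift c) := by
    intro f
    rw [← Function.Bijective.sum_comp hbij, sum_units]
    congr 2
    simp; rfl
  have hmsq : ∀ c : Fˣ, m (ψ₀.mulShift c) ^ 2 = m (ψ₀.mulShift c) := by
    intro c
    have := hm1 c
    interval_cases h : m (ψ₀.mulShift c) <;> rfl
  refine ⟨m 0, s, ∑ c : Fˣ, m (ψ₀.mulShift c), ?_, hsD, hs, ?_, ?_, ?_⟩
  · rw [← split]
    have := hmx 0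
    simp only [AddChar.map_zero_eq_one, mul_one, LinearMap.trace_one] at this
    exact_mod_cast this
  · have := parseval m
    simp only [← hmx, ru_apply] at this
    rw [this]
    have h2 := split (fun ψ => m ψ ^ 2)
    simp only [hmsq] at h2
    congr 1
    exact_mod_cast h2
  · intro hse h0 x hx
    have hall : ∀ ψ, m ψ = 1 := by
      intro ψ
      obtain ⟨c, rfl⟩ := hbij.2 ψ
      by_cases hc : c = 0
      · subst hc
        change m (ψ₀.mulShift 0) = 1
        rw [AddChar.mulShift_zero]; exact h0
      · exact hs1 hse (Units.mk0 c hc)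
    have := hmx x
    simp only [hall, ru_apply] at this
    rw [this]
    simp [sum_dual, hx]
  · have hc0 : ∀ b : Additive Fˣ, rt ρ b * wt (ru ρ) 0 = wt (ru ρ) 0 * rt ρ b := by
      intro b
      unfold wt
      rw [mul_smul_comm, smul_mul_assoc, Finset.mul_sum, Finset.sum_mul]
      congr 1
      have hinj : Function.Bijective (fun x : F => ((b.toMul : Fˣ) : F) ^ 2 * x) :=
        mulLeft_bijective₀ _ (by simp)
      refine Fintype.sum_equiv (Equiv.ofBijective _ hinj) _ _ fun (x : F) => ?_
      simp only [AddChar.zero_apply, one_smul, ru_apply, Equiv.ofBijective_apply]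
      change ρ (t b.toMul) * _ = _ * ρ (t b.toMul)
      rw [← map_mul, tut, map_mul]
    obtain ⟨m', hm', hmx'⟩ := exists_mult (rt ρ) (wt (ru ρ) 0) (E_idem ρ 0) hc0
    refine ⟨m', ?_, ?_⟩
    · have := hmx' 0
      simp only [AddChar.map_zero_eq_one, mul_one, one_mul, ← hm] at this
      exact_mod_cast this.symm
    · intro b hb
      have := hmx' (Additive.ofMul b)
      rw [← this]
      have e : ρ (t b) = ∑ ψ, ρ (t b) * wt (ru ρ) ψ := by
        rw [← Finset.mul_sum, sum_wt, mul_one]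
      rw [e, map_sum, Finset.sum_eq_single 0]
      · rfl
      · intro ψ _ hψ
        rw [← E_idem, ← mul_assoc, LinearMap.trace_mul_comm, ← mul_assoc]
        change tr (hf ρ ψ (t b)) = 0
        rw [hf_zero ρ hψ (t b) (by simp [t]), map_zero]
        simp only [t, A_mk, D_mk]
        intro h
        apply hb
        rw [sq]
        nth_rewrite 1 [Units.ext h]
        simp
      · simp
end
end SFP

namespace SFP
noncomputable section
set_option linter.unusedSectionVars false
variable {V : Type} [AddCommGroup V] [Module ℂ V] [FiniteDimensional ℂ V]
variable {F : Type} [Field F] [Fintype F]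

def conjSet {G : Type} [Group G] [Fintype G] (X : Finset G) : Finset G :=
  Finset.univ.filter (fun g => ∃ x, x * g * x⁻¹ ∈ X)

lemma mem_conjSet {G : Type} [Group G] [Fintype G] {X : Finset G} {g : G} :
    g ∈ conjSet X ↔ ∃ x, x * g * x⁻¹ ∈ X := by simp [conjSet]

lemma ti {G : Type} [Group G] [Fintype G] (f : G → ℝ) (hf0 : ∀ g, 0 ≤ f g)
    (hf : ∀ x g, f (x * g * x⁻¹) = f g) (X N : Finset G)
    (hN : ∀ h ∈ X, ∀ x, x * h * x⁻¹ ∈ X → x ∈ N) :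
    (Fintype.card G : ℝ) * ∑ h ∈ X, f h ≤
      N.card * ∑ g ∈ conjSet X, f g := by
  have h1 : (Fintype.card G : ℝ) * ∑ h ∈ X, f h =
      ∑ x : G, ∑ g : G, if x * g * x⁻¹ ∈ X then f g else 0 := by
    have : ∀ x : G, (∑ g : G, if x * g * x⁻¹ ∈ X then f g else 0) = ∑ h ∈ X, f h := by
      intro x
      rw [← Finset.sum_filter]
      refine Finset.sum_bij (fun g _ => x * g * x⁻¹) ?_ ?_ ?_ ?_
      · intro g hg; simpa using hg
      · intro a _ b _ h; simpa using h
      · intro h hh; exact ⟨x⁻¹ * h * x, by simpa [mul_assoc] using hh, by group⟩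
      · intro g _; exact (hf x g).symm
    simp [this]
  have h2 : ∀ g : G, ((Finset.univ.filter fun x : G => x * g * x⁻¹ ∈ X).card : ℝ) * f g ≤
      if (∃ x, x * g * x⁻¹ ∈ X) then (N.card : ℝ) * f g else 0 := by
    intro g
    split_ifs with h
    · obtain ⟨x₀, hx₀⟩ := h
      refine mul_le_mul_of_nonneg_right ?_ (hf0 g)
      norm_cast
      refine Finset.card_le_card_of_injOn (fun x => x * x₀⁻¹) ?_ ?_
      · intro x hx
        simp only [Finset.coe_filter, Finset.mem_univ, true_and, Set.mem_ofPred_eq] at hx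
        refine hN _ hx₀ _ ?_
        convert hx using 1
        group
      · intro a _ b _ h
        exact mul_right_cancel h
    · have : (Finset.univ.filter fun x : G => x * g * x⁻¹ ∈ X) = ∅ := by
        ext x; simp; exact fun hx => h ⟨x, hx⟩
      simp [this]
  rw [h1, Finset.sum_comm, Finset.mul_sum, conjSet, Finset.sum_filter]
  refine Finset.sum_le_sum fun g _ => le_trans (le_of_eq ?_) (h2 g)
  rw [← Finset.sum_filter]; simp

def nz (ρ : Representation ℂ (SL2 F) V) (g : SL2 F) : ℝ := ‖tr (ρ g)‖ ^ 2

lemma nz_nonneg (ρ : Representation ℂ (SL2 F) V) (g : SL2 F) : 0 ≤ nz ρ g := by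
  unfold nz; positivity

lemma tr_conj {G : Type} [Group G] (ρ : Representation ℂ G V) (x g : G) :
    tr (ρ (x * g * x⁻¹)) = tr (ρ g) := Representation.char_conj ρ g x

lemma nz_conj (ρ : Representation ℂ (SL2 F) V) (x g : SL2 F) : nz ρ (x * g * x⁻¹) = nz ρ g := by
  unfold nz
  rw [tr_conj]

lemma sum_norm {G : Type} [Group G] [Fintype G] {ρ : Representation ℂ G V} (h : NormOne ρ) :
    ∑ g, ‖tr (ρ g)‖ ^ 2 = Fintype.card G := by
  have h' := h
  unfold NormOne at h'
  have : ∀ g, tr (ρ g) * tr (ρ g⁻¹) = ((‖tr (ρ g)‖ ^ 2 : ℝ) : ℂ) := by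
    intro g
    rw [tr_inv, Complex.mul_conj, Complex.normSq_eq_norm_sq]
  simp only [this] at h'
  exact_mod_cast h'

lemma card_SL2 : Fintype.card (SL2 F) = Fintype.card F * (Fintype.card F - 1) * (Fintype.card F + 1) := by
  let e : (Fˣ × F) × Option F ≃ SL2 F :=
    { toFun := fun z => match z with
        | ((b, x), none) => t b * u x
        | ((b, x), some y) => t b * u x * mk 0 1 (-1) 0 (by ring) * u y
      invFun := fun g =>
        if h : C' g = 0 then
          ((Units.mk0 (A' g) (by intro h'; have := dt g; simp [h, h'] at this), B' g / A' g), none)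
        else ((Units.mk0 (-(C' g)⁻¹) (by simpa using h), A' g * C' g), some (D' g / C' g))
      left_inv := by
        rintro ⟨⟨b, x⟩, _ | y⟩
        · simp [t, u]
        · simp [t, u]
          constructor <;> field_simp
      right_inv := by
        intro g
        have hd := dt g
        by_cases h : C' g = 0
        · have ha : A' g ≠ 0 := by intro h'; simp [h, h'] at hd
          simp only [h, dif_pos]
          rw [h] at hd
          apply ext4 <;> simp [t, u, h]
          · field_simp
          · field_simp; linear_combination -hd
        · simp only [h, dif_neg, not_false_eq_true]
          apply ext4 <;> simp [t, u]
          · field_simp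
          · field_simp; linear_combination hd
          · field_simp }
  rw [← Fintype.card_congr e]
  simp [Fintype.card_units]
  ring

def tr2 (g : SL2 F) : F := A' g + D' g

lemma tr2_conj (x g : SL2 F) : tr2 (x * g * x⁻¹) = tr2 g := by
  simp [tr2]
  linear_combination (A' g + D' g) * dt x

def noEig (g : SL2 F) : Prop := ∀ l : F, l ^ 2 - tr2 g * l + 1 ≠ 0

def XU (F : Type) [Field F] [Fintype F] : Finset (SL2 F) :=
  ((Finset.univ.filter fun a : Fˣ => a ^ 2 = 1) ×ˢ (Finset.univ.filter fun x : F => x ≠ 0)).image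
    fun z => t z.1 * u z.2
def XT (F : Type) [Field F] [Fintype F] : Finset (SL2 F) :=
  (Finset.univ.filter fun a : Fˣ => ¬ a ^ 2 = 1).image t
def XZ (F : Type) [Field F] [Fintype F] : Finset (SL2 F) :=
  (Finset.univ.filter fun a : Fˣ => a ^ 2 = 1).image t
def NU (F : Type) [Field F] [Fintype F] : Finset (SL2 F) :=
  (Finset.univ : Finset (Fˣ × F)).image fun z => t z.1 * u z.2
def NT (F : Type) [Field F] [Fintype F] : Finset (SL2 F) :=
  (Finset.univ : Finset Fˣ).image t ∪
    (Finset.univ : Finset Fˣ).image fun b : Fˣ => mk (0 : F) b (-(b⁻¹ : Fˣ)) 0 (by simp)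

lemma t_inj {a b : Fˣ} (h : t a = t b) : a = b := by
  have := congrArg A' h
  simpa [t, Units.ext_iff] using this

lemma inv_of_sq {a : Fˣ} (h : a ^ 2 = 1) : (a : F)⁻¹ = a := by
  have : (a : F) * a = 1 := by rw [← Units.val_mul, ← sq, h]; simp
  exact inv_eq_of_mul_eq_one_left this

lemma sub_inv_ne {a : Fˣ} (h : ¬ a ^ 2 = 1) : (a : F) - (a : F)⁻¹ ≠ 0 := by
  intro h'
  apply h
  ext
  rw [sub_eq_zero] at h'
  push_cast
  rw [sq]
  nth_rewrite 1 [h']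
  simp

lemma mem_NU {g : SL2 F} (h : C' g = 0) : g ∈ NU F := by
  have hd := dt g
  rw [h] at hd
  have ha : A' g ≠ 0 := by intro h'; simp [h'] at hd
  simp only [NU, Finset.mem_image, Finset.mem_univ, true_and]
  refine ⟨(Units.mk0 (A' g) ha, B' g / A' g), ?_⟩
  apply ext4 <;> simp [t, u, h]
  · field_simp
  · field_simp; linear_combination -hd

lemma mem_NT {g : SL2 F} (h : A' g * B' g = 0) (h2 : C' g * D' g = 0) : g ∈ NT F := by
  have hd := dt g
  simp only [NT, Finset.mem_union, Finset.mem_image, Finset.mem_univ, true_and]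
  by_cases ha : A' g = 0
  · right
    have hb : B' g ≠ 0 := by intro h'; simp [ha, h'] at hd
    have hc : C' g ≠ 0 := by intro h'; simp [ha, h'] at hd
    have hd0 : D' g = 0 := (mul_eq_zero.1 h2).resolve_left hc
    rw [ha] at hd
    refine ⟨Units.mk0 (B' g) hb, ?_⟩
    apply ext4 <;> simp [ha, hd0]
    field_simp; linear_combination hd
  · left
    have hb : B' g = 0 := (mul_eq_zero.1 h).resolve_left ha
    rw [hb] at hd
    have hd0 : D' g ≠ 0 := by intro h'; simp [h'] at hd
    have hc : C' g = 0 := (mul_eq_zero.1 h2).resolve_right hd0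
    refine ⟨Units.mk0 (A' g) ha, ?_⟩
    apply ext4 <;> simp [t, hb, hc]
    field_simp; linear_combination -hd

lemma hNU : ∀ h ∈ XU F, ∀ x, x * h * x⁻¹ ∈ XU F → x ∈ NU F := by
  intro h hh x hx
  simp only [XU, Finset.mem_image, Finset.mem_product, Finset.mem_filter, Finset.mem_univ,
    true_and, Prod.exists] at hh hx
  obtain ⟨a, y, ⟨ha, hy⟩, rfl⟩ := hh
  obtain ⟨b, z, ⟨-, -⟩, e⟩ := hx
  apply mem_NU
  have e2 := congrArg C' e
  have := inv_of_sq ha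
  simp [t, u, this] at e2
  have e3 : C' x ^ 2 * (a * y) = 0 := by linear_combination e2
  simpa [hy] using e3

lemma hNT : ∀ h ∈ XT F, ∀ x, x * h * x⁻¹ ∈ XT F → x ∈ NT F := by
  intro h hh x hx
  simp only [XT, Finset.mem_image, Finset.mem_filter, Finset.mem_univ,
    true_and] at hh hx
  obtain ⟨a, ha, rfl⟩ := hh
  obtain ⟨b, -, e⟩ := hx
  have h0 := sub_inv_ne ha
  have e2 := congrArg C' e
  have e3 := congrArg B' e
  simp [t] at e2 e3
  apply mem_NT
  · have : (A' x * B' x) * (a - (a : F)⁻¹) = 0 := by linear_combination e3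
    simpa [h0] using this
  · have : (C' x * D' x) * (a - (a : F)⁻¹) = 0 := by linear_combination -e2
    simpa [h0] using this

lemma card_NU : (NU F).card ≤ (Fintype.card F - 1) * Fintype.card F := by
  refine Finset.card_image_le.trans ?_
  simp [Fintype.card_units]

lemma card_NT : (NT F).card ≤ 2 * (Fintype.card F - 1) := by
  refine (Finset.card_union_le _ _).trans ?_
  rw [two_mul]
  refine add_le_add (Finset.card_image_le.trans ?_) (Finset.card_image_le.trans ?_) <;>
    simp [Fintype.card_units]

lemma rho_t {ρ : Representation ℂ (SL2 F) V} (hZ : ∀ a : Fˣ, a ^ 2 = 1 → ρ (t a) = 1) {a : Fˣ}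
    (ha : a ^ 2 = 1) (g : SL2 F) : ρ (t a * g) = ρ g := by
  rw [map_mul, hZ a ha, one_mul]

lemma main_ineq {ρ : Representation ℂ (SL2 F) V} (h1 : NormOne ρ)
    (hZ : ∀ a : Fˣ, a ^ 2 = 1 → ρ (t a) = 1) (W : Finset (SL2 F)) (hW : ∀ g ∈ W, noEig g) :
    (ep F : ℝ) * (Module.finrank ℂ V : ℝ) ^ 2 +
      (Fintype.card F + 1) * (ep F * (∑ x : F, ‖tr (ρ (u x))‖ ^ 2 - (Module.finrank ℂ V : ℝ) ^ 2)) +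
      Fintype.card F * (Fintype.card F + 1) / 2 *
        (∑ b ∈ Finset.univ.filter (fun a : Fˣ => ¬ a ^ 2 = 1), ‖tr (ρ (t b))‖ ^ 2) +
      ∑ g ∈ W, nz ρ g ≤ Fintype.card F * (Fintype.card F - 1) * (Fintype.card F + 1) := by
  set q := Fintype.card F with hq
  have hq1 : 1 < q := Fintype.one_lt_card
  set d := (Module.finrank ℂ V : ℝ)
  have hd1 : ‖tr (ρ 1)‖ ^ 2 = d ^ 2 := by simp [d]
  set KU := conjSet (XU F) with hKU
  set KT := conjSet (XT F) with hKT
  have trU : ∀ g ∈ KU, ∃ l : F, l ^ 2 = 1 ∧ tr2 g = 2 * l := by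
    intro g hg
    simp only [hKU, mem_conjSet, Finset.mem_filter, Finset.mem_univ, true_and, XU, Finset.mem_image,
      Finset.mem_product, Prod.exists] at hg
    obtain ⟨x, a, y, ⟨ha, hy⟩, e⟩ := hg
    refine ⟨a, by rw [← Units.val_pow_eq_pow_val, ha]; simp, ?_⟩
    rw [← tr2_conj x, ← e]
    simp [tr2, t, u, inv_of_sq ha]; ring
  have trT : ∀ g ∈ KT, ∃ a : Fˣ, ¬ a ^ 2 = 1 ∧ tr2 g = a + (a : F)⁻¹ := by
    intro g hg
    simp only [hKT, mem_conjSet, Finset.mem_filter, Finset.mem_univ, true_and, XT, Finset.mem_image] at hg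
    obtain ⟨x, a, ha, e⟩ := hg
    refine ⟨a, ha, ?_⟩
    rw [← tr2_conj x, ← e]
    simp [tr2, t]
  have trZ : ∀ g ∈ XZ F, ∃ l : F, l ^ 2 = 1 ∧ tr2 g = 2 * l := by
    intro g hg
    simp only [XZ, Finset.mem_filter, Finset.mem_univ, true_and, Finset.mem_image] at hg
    obtain ⟨a, ha, rfl⟩ := hg
    refine ⟨a, by rw [← Units.val_pow_eq_pow_val, ha]; simp, ?_⟩
    simp [tr2, t, inv_of_sq ha]; ring
  have dUT : ∀ g, (∃ l : F, l ^ 2 = 1 ∧ tr2 g = 2 * l) →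
      (∃ a : Fˣ, ¬ a ^ 2 = 1 ∧ tr2 g = a + (a : F)⁻¹) → False := by
    rintro g ⟨l, hl, e1⟩ ⟨a, ha, e2⟩
    apply sub_inv_ne ha
    have h0 : ((a : F) - (a : F)⁻¹) ^ 2 = 0 := by
      have : (a : F) * (a : F)⁻¹ = 1 := by simp
      rw [e1] at e2
      linear_combination (-(a : F) - (a : F)⁻¹ - 2 * l) * e2 + 4 * hl - 4 * this
    exact pow_eq_zero_iff (two_ne_zero) |>.1 h0
  have dZU : Disjoint (XZ F) KU := by
    rw [Finset.disjoint_left]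
    intro g hz hu
    simp only [XZ, Finset.mem_filter, Finset.mem_univ, true_and, Finset.mem_image] at hz
    obtain ⟨a, ha, rfl⟩ := hz
    simp only [hKU, mem_conjSet, Finset.mem_filter, Finset.mem_univ, true_and, XU, Finset.mem_image,
      Finset.mem_product, Prod.exists] at hu
    obtain ⟨x, b, y, ⟨hb, hy⟩, e⟩ := hu
    have := congrArg B' e
    simp [t, u, inv_of_sq ha] at this
    have h0 : (b : F) * y = 0 := by linear_combination this
    simp [hy] at h0
  have dT : Disjoint (XZ F ∪ KU) KT := by
    rw [Finset.disjoint_left]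
    intro g h ht
    refine dUT g ?_ (trT g ht)
    rcases Finset.mem_union.1 h with h | h
    · exact trZ g h
    · exact trU g h
  have dW : Disjoint (XZ F ∪ KU ∪ KT) W := by
    rw [Finset.disjoint_left]
    intro g h hw
    rcases Finset.mem_union.1 h with h | h
    · have : ∃ l : F, l ^ 2 = 1 ∧ tr2 g = 2 * l := by
        rcases Finset.mem_union.1 h with h | h
        · exact trZ g h
        · exact trU g h
      obtain ⟨l, hl, e⟩ := this
      apply hW g hw l
      rw [e]; linear_combination -hl
    · obtain ⟨a, ha, e⟩ := trT g h
      apply hW g hw a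
      rw [e]
      have : (a : F) * (a : F)⁻¹ = 1 := by simp
      linear_combination -this
  have tot : ∑ g ∈ XZ F, nz ρ g + ∑ g ∈ KU, nz ρ g + ∑ g ∈ KT, nz ρ g + ∑ g ∈ W, nz ρ g ≤
      q * (q - 1) * (q + 1) := by
    rw [← Finset.sum_union dZU, ← Finset.sum_union dT, ← Finset.sum_union dW]
    calc _ ≤ ∑ g, nz ρ g := Finset.sum_le_sum_of_subset_of_nonneg (Finset.subset_univ _)
            (fun g _ _ => nz_nonneg ρ g)
      _ = _ := by
        unfold nz
        rw [sum_norm h1, card_SL2]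
        rw [← hq]; push_cast [hq1.le]; rfl
  have hG : (Fintype.card (SL2 F) : ℝ) = q * (q - 1) * (q + 1) := by
    rw [card_SL2, ← hq]; push_cast [hq1.le]; rfl
  have sZ : ∑ g ∈ XZ F, nz ρ g = ep F * d ^ 2 := by
    rw [XZ, Finset.sum_image (fun a _ b _ h => t_inj h)]
    have : ∀ a ∈ (Finset.univ.filter fun a : Fˣ => a ^ 2 = 1), nz ρ (t a) = d ^ 2 := by
      intro a ha
      simp only [Finset.mem_filter, Finset.mem_univ, true_and] at ha
      rw [← hd1]; unfold nz; rw [hZ a ha, map_one ρ]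
    rw [Finset.sum_congr rfl this, Finset.sum_const, card_sq]; simp
  have sU : ∑ g ∈ XU F, nz ρ g = ep F * (∑ x : F, ‖tr (ρ (u x))‖ ^ 2 - d ^ 2) := by
    rw [XU, Finset.sum_image, Finset.sum_product]
    · have : ∀ a ∈ (Finset.univ.filter fun a : Fˣ => a ^ 2 = 1),
          ∑ x ∈ Finset.univ.filter (fun x : F => x ≠ 0), nz ρ (t a * u x) =
          (∑ x : F, ‖tr (ρ (u x))‖ ^ 2 - d ^ 2) := by
        intro a ha
        simp only [Finset.mem_filter, Finset.mem_univ, true_and] at ha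
        unfold nz
        simp only [rho_t hZ ha]
        rw [eq_sub_iff_add_eq, ← hd1, ← u_zero, Finset.filter_ne', Finset.sum_erase_add _ _ (Finset.mem_univ _)]
      rw [Finset.sum_congr rfl this, Finset.sum_const, card_sq]; simp
    · rintro ⟨a, x⟩ _ ⟨b, y⟩ _ h
      have h1 := congrArg A' h
      have h2 := congrArg B' h
      simp [t, u] at h1 h2
      have : a = b := Units.ext h1
      subst this
      simpa using h2
  have sT : ∑ g ∈ XT F, nz ρ g =
      (∑ b ∈ Finset.univ.filter (fun a : Fˣ => ¬ a ^ 2 = 1), ‖tr (ρ (t b))‖ ^ 2) := by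
    rw [XT, Finset.sum_image (fun a _ b _ h => t_inj h)]; rfl
  have iU := ti (nz ρ) (nz_nonneg ρ) (nz_conj ρ) (XU F) (NU F) hNU
  have iT := ti (nz ρ) (nz_nonneg ρ) (nz_conj ρ) (XT F) (NT F) hNT
  rw [← hKU, sU, hG] at iU
  rw [← hKT, sT, hG] at iT
  have hq1' : (0 : ℝ) < q - 1 := by
    have : (1 : ℝ) < q := by exact_mod_cast hq1
    linarith
  have hq0 : (0 : ℝ) < q := by linarith
  have cU : ((NU F).card : ℝ) ≤ (q - 1) * q := by
    have := card_NU (F := F)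
    have h : ((NU F).card : ℝ) ≤ (((q - 1) * q : ℕ) : ℝ) := by exact_mod_cast this
    push_cast [hq1.le] at h; exact h
  have cT : ((NT F).card : ℝ) ≤ 2 * (q - 1) := by
    have := card_NT (F := F)
    have h : ((NT F).card : ℝ) ≤ ((2 * (q - 1) : ℕ) : ℝ) := by exact_mod_cast this
    push_cast [hq1.le] at h; exact h
  have kU : 0 ≤ ∑ g ∈ KU, nz ρ g := Finset.sum_nonneg fun g _ => nz_nonneg ρ g
  have kT : 0 ≤ ∑ g ∈ KT, nz ρ g := Finset.sum_nonneg fun g _ => nz_nonneg ρ g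
  have jU := iU.trans (mul_le_mul_of_nonneg_right cU kU)
  have jT := iT.trans (mul_le_mul_of_nonneg_right cT kT)
  have jU' : (q + 1) * (ep F * (∑ x : F, ‖tr (ρ (u x))‖ ^ 2 - d ^ 2)) ≤ ∑ g ∈ KU, nz ρ g := by
    have : 0 < (q - 1) * (q : ℝ) := by positivity
    refine le_of_mul_le_mul_left ?_ this
    linarith
  have jT' : (q : ℝ) * (q + 1) / 2 *
      (∑ b ∈ Finset.univ.filter (fun a : Fˣ => ¬ a ^ 2 = 1), ‖tr (ρ (t b))‖ ^ 2) ≤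
      ∑ g ∈ KT, nz ρ g := by
    have : 0 < 2 * ((q : ℝ) - 1) := by positivity
    refine le_of_mul_le_mul_left ?_ this
    linarith
  rw [sZ] at tot
  linarith
end
end SFP

namespace SFP
noncomputable section
set_option linter.unusedSectionVars false
variable {V : Type} [AddCommGroup V] [Module ℂ V] [FiniteDimensional ℂ V]
variable {F : Type} [Field F] [Fintype F]

lemma arith_core (q a S D e : ℝ) (hq : 2 ≤ q)
    (h : q * (q ^ 2 - 1) ≥ -e * q * (a + D) ^ 2 + e * q * (q + 1) * (a ^ 2 + D) +
      q * (q + 1) / 2 * ((q - 1) * a - e * a ^ 2) + S) (s : ℝ) (hs : e * D = s * (q - 1))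
      (he : e = 1 ∨ e = 2) :
    S ≤ q * (q - 1) * (q + 1 - (e * a ^ 2 / 2 + a * ((q + 1) / 2 - 2 * s) +
        (s * (q + 1) - s ^ 2 * (q - 1) / e))) := by
  have hD : D = s * (q - 1) / e := by rcases he with rfl | rfl <;> field_simp <;> linarith
  subst hD
  rcases he with rfl | rfl <;> nlinarith [h]

lemma sum_T {ρ : Representation ℂ (SL2 F) V} (a : ℕ) (m : AddChar (Additive Fˣ) ℂ → ℕ)
    (hm : ∑ ψ, m ψ = a)
    (hT : ∀ b : Fˣ, b ^ 2 ≠ 1 → tr (ρ (t b)) = ∑ ψ, (m ψ : ℂ) * ψ (Additive.ofMul b)) :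
    ((Fintype.card F : ℝ) - 1) * a - ep F * (a : ℝ) ^ 2 ≤
    ∑ b ∈ Finset.univ.filter (fun a : Fˣ => ¬ a ^ 2 = 1), ‖tr (ρ (t b))‖ ^ 2 := by
  have hp := parseval m
  have e1 : ∑ x : Additive Fˣ, ‖∑ ψ, (m ψ : ℂ) * ψ x‖ ^ 2 =
      ∑ b : Fˣ, ‖∑ ψ, (m ψ : ℂ) * ψ (Additive.ofMul b)‖ ^ 2 :=
    Fintype.sum_equiv Additive.toMul _ _ (fun x => rfl)
  rw [e1, ← Finset.sum_filter_add_sum_filter_not _ (fun b : Fˣ => b ^ 2 = 1)] at hp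
  have e2 : ∑ b ∈ Finset.univ.filter (fun a : Fˣ => ¬ a ^ 2 = 1), ‖tr (ρ (t b))‖ ^ 2 =
     ∑ b ∈ Finset.univ.filter (fun a : Fˣ => ¬ a ^ 2 = 1),
      ‖∑ ψ, (m ψ : ℂ) * ψ (Additive.ofMul b)‖ ^ 2 := by
    refine Finset.sum_congr rfl fun b hb => ?_
    rw [hT b (by simpa using hb)]
  rw [e2]
  have e3 : ∑ b ∈ Finset.univ.filter (fun a : Fˣ => a ^ 2 = 1),
      ‖∑ ψ, (m ψ : ℂ) * ψ (Additive.ofMul b)‖ ^ 2 ≤ ep F * (a : ℝ) ^ 2 := by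
    rw [← card_sq, ← nsmul_eq_mul]
    refine Finset.sum_le_card_nsmul _ _ _ fun b _ => ?_
    have := norm_le_mult m (Additive.ofMul b)
    have h2 : ∑ ψ, (m ψ : ℝ) = a := by exact_mod_cast hm
    rw [h2] at this
    gcongr
  have e4 : (a : ℝ) ≤ ∑ ψ, (m ψ : ℝ) ^ 2 := by
    have h2 : ∑ ψ, (m ψ : ℝ) = a := by exact_mod_cast hm
    rw [← h2]
    refine Finset.sum_le_sum fun ψ _ => ?_
    norm_cast
    exact Nat.le_self_pow two_ne_zero _
  have e5 : (Fintype.card (Additive Fˣ) : ℝ) = Fintype.card F - 1 := by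
    have : Fintype.card (Additive Fˣ) = Fintype.card F - 1 := by
      rw [← Fintype.card_units]; exact Fintype.card_congr Additive.toMul
    rw [this]
    have : 1 ≤ Fintype.card F := Fintype.card_pos
    push_cast [this]; rfl
  rw [e5] at hp
  have h0 : (0 : ℝ) ≤ Fintype.card F - 1 := by
    have : 1 ≤ Fintype.card F := Fintype.card_pos
    have : (1 : ℝ) ≤ Fintype.card F := by exact_mod_cast this
    linarith
  have := mul_le_mul_of_nonneg_left e4 h0
  linarith

def noEigSet (F : Type) [Field F] [Fintype F] : Finset (SL2 F) := Finset.univ.filter noEig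

set_option maxHeartbeats 1000000 in
lemma classify {ρ : Representation ℂ (SL2 F) V} (h1 : NormOne ρ)
    (hZ : ∀ a : Fˣ, a ^ 2 = 1 → ρ (t a) = 1) :
    Module.finrank ℂ V = 1 ∨
    (Module.finrank ℂ V = Fintype.card F ∧ ∀ x : F, x ≠ 0 → tr (ρ (u x)) = 0) ∨
    (ep F = 2 ∧ 2 * Module.finrank ℂ V = Fintype.card F + 1 ∧ ∀ g, noEig g → tr (ρ g) = 0) ∨
    (Module.finrank ℂ V = Fintype.card F + 1 ∧ (∀ g, noEig g → tr (ρ g) = 0) ∧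
      ∃ m : AddChar (Additive Fˣ) ℂ → ℕ, ∑ ψ, m ψ = 2 ∧
        ∀ b : Fˣ, b ^ 2 ≠ 1 → tr (ρ (t b)) = ∑ ψ, (m ψ : ℂ) * ψ (Additive.ofMul b)) ∨
    (∃ s : ℕ, ep F * Module.finrank ℂ V = s * (Fintype.card F - 1) ∧ 1 ≤ s ∧ s ≤ ep F ∧
      (∀ b : Fˣ, b ^ 2 ≠ 1 → tr (ρ (t b)) = 0) ∧
      (s = 2 → ∑ g ∈ noEigSet F, nz ρ g ≤
        (Fintype.card F : ℝ) * (Fintype.card F - 1) * (Fintype.card F - 3))) := by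
  obtain ⟨a, s, D, hd, hD, hs, hU, hSt, m, hma, hT⟩ := weights h1
  have hI := main_ineq h1 hZ (noEigSet F) (by intro g hg; simpa [noEigSet] using hg)
  have hTT := sum_T a m hma hT
  have hd0 : Module.finrank ℂ V ≠ 0 := by exact_mod_cast h1.d_ne
  set q := Fintype.card F with hq
  have hq2 : 2 ≤ q := Fintype.one_lt_card
  have hq2' : (2 : ℝ) ≤ q := by exact_mod_cast hq2
  set S := ∑ g ∈ noEigSet F, nz ρ g with hS
  have hS0 : 0 ≤ S := Finset.sum_nonneg fun g _ => nz_nonneg ρ g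
  have hSz : S ≤ 0 → ∀ g, noEig g → tr (ρ g) = 0 := by
    intro hle g hg
    have := (Finset.sum_eq_zero_iff_of_nonneg (fun g _ => nz_nonneg ρ g)).1 (le_antisymm hle hS0) g
      (by simpa [noEigSet] using hg)
    simpa [nz] using this
  rw [hU, hd] at hI
  have hDr : (ep F : ℝ) * D = s * (q - 1) := by
    have : ((ep F * D : ℕ) : ℝ) = ((s * (q - 1) : ℕ) : ℝ) := by rw [hD]
    push_cast [(by omega : 1 ≤ q)] at this
    exact this
  have hep : (ep F : ℝ) = 1 ∨ (ep F : ℝ) = 2 := by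
    unfold ep; split_ifs <;> simp
  have hcore := arith_core q a S D (ep F) hq2' (by
    have h0 : (0 : ℝ) ≤ q * (q + 1) / 2 := by positivity
    have := mul_le_mul_of_nonneg_left hTT h0
    push_cast at hI
    nlinarith [hI, this]) s hDr hep
  have hqq : (0 : ℝ) < q * (q - 1) := by nlinarith
  have hgen : (ep F * (a : ℝ) ^ 2 / 2 + a * ((q + 1) / 2 - 2 * s) +
        (s * (q + 1) - (s : ℝ) ^ 2 * (q - 1) / ep F)) ≤ q + 1 := by
    by_contra hcon
    push Not at hcon
    have : (q : ℝ) * (q - 1) * (q + 1 - (ep F * (a : ℝ) ^ 2 / 2 + a * ((q + 1) / 2 - 2 * s) +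
        (s * (q + 1) - (s : ℝ) ^ 2 * (q - 1) / ep F))) < 0 :=
      mul_neg_of_pos_of_neg hqq (by linarith)
    linarith
  have hfin0 : a = 0 → 1 ≤ s := by
    intro ha
    by_contra h
    have : s = 0 := by omega
    subst this
    have : D = 0 := by
      rw [zero_mul] at hD
      rcases mul_eq_zero.1 hD with h | h
      · unfold ep at h; split_ifs at h
      · exact h
    omega
  have hTa : a = 0 → ∀ b : Fˣ, b ^ 2 ≠ 1 → tr (ρ (t b)) = 0 := by
    intro ha b hb
    rw [hT b hb]
    refine Finset.sum_eq_zero fun ψ _ => ?_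
    have : m ψ = 0 := by
      have := Finset.sum_eq_zero_iff.1 (hma.trans ha) ψ (Finset.mem_univ _)
      exact this
    simp [this]
  rcases Nat.lt_or_ge a 1 with ha | ha
  · -- a = 0
    have ha0 : a = 0 := by omega
    right; right; right; right
    refine ⟨s, ?_, hfin0 ha0, hs, hTa ha0, ?_⟩
    · rw [hd, ha0, zero_add, hD]
    · intro hs2
      have he2 : (ep F : ℝ) = 2 := by
        rcases hep with h | h
        · have : ep F = 1 := by exact_mod_cast h
          omega
        · exact h
      rw [ha0, hs2, he2] at hcore
      push_cast at hcore
      nlinarith [hcore]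
  · have har : (1 : ℝ) ≤ a := by exact_mod_cast ha
    by_cases he : ep F = 1
    · have he' : (ep F : ℝ) = 1 := by exact_mod_cast he
      rw [he'] at hgen hcore
      rw [he] at hD hs hSt
      rw [one_mul] at hD
      interval_cases s
      · simp at hD
        left
        have : a < 2 := by
          by_contra h
          have h2 : (2 : ℝ) ≤ a := by exact_mod_cast (not_lt.1 h)
          push_cast at hgen
          nlinarith
        omega
      · have : a < 3 := by
          by_contra h
          have h2 : (3 : ℝ) ≤ a := by exact_mod_cast (not_lt.1 h)
          push_cast at hgen
          nlinarith
        interval_cases a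
        · right; left
          exact ⟨by omega, hSt rfl rfl⟩
        · right; right; right; left
          refine ⟨by omega, hSz ?_, m, hma, hT⟩
          push_cast at hcore
          nlinarith
    · have he2 : ep F = 2 := by
        unfold ep at he ⊢; split_ifs at he ⊢; · simp at he
        rfl
      have he' : (ep F : ℝ) = 2 := by exact_mod_cast he2
      have hq3 : 3 ≤ q := by
        by_contra h
        have h2 : q = 2 := by omega
        have := FiniteField.even_card_iff_char_two (F := F)
        rw [← hq, h2] at this
        have := this.2 (by norm_num)
        simp [ep, this] at he
      have hq3' : (3 : ℝ) ≤ q := by exact_mod_cast hq3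
      rw [he'] at hgen hcore
      rw [he2] at hD hs hSt
      interval_cases s
      · simp at hD
        left
        have : a < 2 := by
          by_contra h
          have h2 : (2 : ℝ) ≤ a := by exact_mod_cast (not_lt.1 h)
          push_cast at hgen
          nlinarith
        omega
      · have : a < 2 := by
          by_contra h
          have h2 : (2 : ℝ) ≤ a := by exact_mod_cast (not_lt.1 h)
          push_cast at hgen
          nlinarith
        interval_cases a
        right; right; left
        refine ⟨he2, by omega, hSz ?_⟩
        push_cast at hcore
        nlinarith
      · have : a < 3 := by
          by_contra h
          have h2 : (3 : ℝ) ≤ a := by exact_mod_cast (not_lt.1 h)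
          push_cast at hgen
          have k1 := mul_nonneg (by linarith : (0 : ℝ) ≤ a - 3) (by linarith : (0 : ℝ) ≤ a)
          have k2 := mul_nonneg (by linarith : (0 : ℝ) ≤ a - 3) (by linarith : (0 : ℝ) ≤ q - 3)
          linarith
        interval_cases a
        · right; left
          exact ⟨by omega, hSt rfl rfl⟩
        · right; right; right; left
          refine ⟨by omega, hSz ?_, m, hma, hT⟩
          push_cast at hcore
          nlinarith
end
end SFP

namespace SFP
noncomputable section
set_option linter.unusedSectionVars false
variable {V : Type} [AddCommGroup V] [Module ℂ V] [FiniteDimensional ℂ V]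
variable {P : Type} [Group P] [Fintype P]

def Ind (P : Type) [Group P] [Fintype P] (k : ℕ) : AddSubmonoid (P → ℂ) :=
  AddSubmonoid.closure {f | ∃ (Q : Subgroup P) (lam : Q → ℂ), IsIrreducibleCharacter lam ∧
    k = Q.index ∧ f = inducedChar Q lam}

lemma sip_of_mem (p : ℕ) {G : Type} [Group G] [Fintype G] (P : Subgroup G)
    (χ : G → ℂ) (d : ℕ) (h : (fun x : P => χ x) ∈ Ind P (p ^ (d.factorization p))) :
    SumInducedProperty p P χ d := by
  obtain ⟨l, hl, hs⟩ := AddSubmonoid.exists_list_of_mem_closure h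
  have h2 : ∀ i : Fin l.length, ∃ (Q : Subgroup P) (lam : Q → ℂ), IsIrreducibleCharacter lam ∧
    p ^ (d.factorization p) = Q.index ∧ l[i] = inducedChar Q lam := fun i => hl _ (by simp)
  choose Q lam h3 h4 h5 using h2
  refine ⟨l.length, Q, lam, h3, h4, fun x => ?_⟩
  have := congrFun hs x
  rw [← this, ← Fin.sum_univ_getElem, Finset.sum_apply]
  exact Finset.sum_congr rfl fun i _ => congrFun (h5 i) x

lemma irr_of_norm {P : Type} [Group P] [Finite P] (ρ : Representation ℂ P V)
    (h : ∀ [Fintype P], NormOne ρ) :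
    IsIrreducibleCharacter (fun g => tr (ρ g)) := by
  have : Fintype P := Fintype.ofFinite P
  refine ⟨FDRep.of ρ, ?_, ?_⟩
  · rw [FDRep.simple_iff_char_is_norm_one, Nat.card_eq_fintype_card]
    exact h
  · rfl

lemma irr_hom {P : Type} [Group P] [Finite P] (Λ : P →* ℂ) :
    IsIrreducibleCharacter (fun g => Λ g) := by
  let ρ : Representation ℂ P ℂ := ⟨⟨fun g => Λ g • 1, by simp⟩, fun a b => by
    show Λ (a * b) • (1 : Module.End ℂ ℂ) = (Λ a • 1) * (Λ b • 1)
    rw [smul_mul_smul_comm, map_mul, mul_one]⟩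
  have hρ : ∀ g, tr (ρ g) = Λ g := by
    intro g
    have : ρ g = Λ g • (1 : Module.End ℂ ℂ) := rfl
    rw [this, map_smul]
    simp
  have := irr_of_norm ρ (by
    intro _
    unfold NormOne
    simp only [hρ, ← map_mul]
    simp)
  simpa only [hρ] using this

def IrrSum (P : Type) [Group P] : AddSubmonoid (P → ℂ) :=
  AddSubmonoid.closure {f | IsIrreducibleCharacter f}

lemma irrSum_aux {P : Type} [Group P] [Finite P] (n : ℕ) :
    ∀ (V : Type) [AddCommGroup V] [Module ℂ V] [FiniteDimensional ℂ V] (ρ : Representation ℂ P V),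
    Module.finrank ℂ V = n → (fun g => tr (ρ g)) ∈ IrrSum P := by
  induction n using Nat.strong_induction_on with
  | _ n ih =>
  intro V _ _ _ ρ hn
  by_cases hi : Representation.IsIrreducible ρ
  · refine AddSubmonoid.subset_closure (irr_of_norm ρ ?_)
    intro _
    have h := Representation.char_orthonormal ρ ρ
    rw [if_pos ⟨Representation.Equiv.refl _⟩, inv_mul_eq_one₀ (by simp)] at h
    rw [NormOne, ← Nat.card_eq_fintype_card]
    exact h.symm
  by_cases h0 : n = 0
  · have : Subsingleton V := Module.finrank_zero_iff.1 (hn.trans h0)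
    have : (fun g => tr (ρ g)) = 0 := by
      ext g
      rw [Subsingleton.elim (ρ g) 0]; simp
    rw [this]; exact zero_mem _
  have : Nontrivial V := Module.nontrivial_of_finrank_pos (R := ℂ) (by omega)
  have hW : ∃ W : Subrepresentation ρ, W ≠ ⊥ ∧ W ≠ ⊤ := by
    by_contra hc
    push Not at hc
    apply hi
    have : Nontrivial (Subrepresentation ρ) := ⟨⊥, ⊤, fun h => by
      have : (⊥ : Submodule ℂ V) = ⊤ := congrArg Subrepresentation.toSubmodule h
      exact bot_ne_top this⟩
    exact { eq_bot_or_eq_top := fun a => or_iff_not_imp_left.2 (hc a) }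
  obtain ⟨W, hb, ht⟩ := hW
  have : Representation.IsSemisimpleRepresentation ρ := by infer_instance
  obtain ⟨W', hc⟩ := exists_isCompl W
  have hc' : IsCompl W.toSubmodule W'.toSubmodule := by
    constructor
    · rw [disjoint_iff]
      exact congrArg Subrepresentation.toSubmodule (disjoint_iff.1 hc.1)
    · rw [codisjoint_iff]
      exact congrArg Subrepresentation.toSubmodule (codisjoint_iff.1 hc.2)
  have hf := Submodule.finrank_add_eq_of_isCompl hc'
  have h1 : Module.finrank ℂ W.toSubmodule ≠ 0 := by
    intro h
    rw [Submodule.finrank_eq_zero] at h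
    exact hb (Subrepresentation.toSubmodule_injective h)
  have h2 : Module.finrank ℂ W'.toSubmodule ≠ 0 := by
    intro h
    apply ht
    apply Subrepresentation.toSubmodule_injective
    exact Submodule.eq_top_of_finrank_eq (by omega)
  have e : (fun g => tr (ρ g)) = (fun g => tr (W.toRepresentation g)) + fun g => tr (W'.toRepresentation g) := by
    ext g
    have := LinearMap.trace_eq_sum_trace_restrict (R := ℂ) (M := V) (ι := Bool)
      (N := fun b => if b then W.toSubmodule else W'.toSubmodule)
      ((DirectSum.isInternal_submodule_iff_isCompl _ (i := true) (j := false) (by simp) (by ext b; cases b <;> simp)).2 (by simpa using hc'))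
      (f := ρ g) (by intro b; cases b; exacts [fun v hv => W'.apply_mem_toSubmodule g hv, fun v hv => W.apply_mem_toSubmodule g hv])
    rw [this]
    simp
    rfl
  rw [e]
  exact add_mem (ih _ (by omega) _ _ rfl) (ih _ (by omega) _ _ rfl)

lemma irrSum_mem {P : Type} [Group P] [Finite P] (ρ : Representation ℂ P V) :
    (fun g => tr (ρ g)) ∈ IrrSum P := irrSum_aux _ V ρ rfl

lemma irr_top {f : P → ℂ} (h : IsIrreducibleCharacter f) : f ∈ Ind P 1 := by
  obtain ⟨W, hW, rfl⟩ := h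
  refine AddSubmonoid.subset_closure ⟨⊤, fun x => W.character x, ?_, by simp, ?_⟩
  · let ρ : Representation ℂ (⊤ : Subgroup P) W := MonoidHom.comp W.ρ (⊤ : Subgroup P).subtype
    refine irr_of_norm ρ ?_
    intro _
    have := (FDRep.simple_iff_char_is_norm_one W).1 hW
    unfold NormOne
    rw [← Nat.card_eq_fintype_card, Subgroup.card_top, ← this]
    exact Fintype.sum_equiv Subgroup.topEquiv.toEquiv _ _ fun x => rfl
  · ext g
    unfold inducedChar
    have : Fintype.card (⊤ : Subgroup P) = Fintype.card P := by
      rw [← Nat.card_eq_fintype_card, Subgroup.card_top, Nat.card_eq_fintype_card]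
    simp only [Subgroup.mem_top, dite_true, FDRep.char_conj]
    simp

lemma L0 (ρ : Representation ℂ P V) : (fun g => tr (ρ g)) ∈ Ind P 1 := by
  have h := irrSum_mem ρ
  exact (AddSubmonoid.closure_le.2 fun f hf => irr_top hf : IrrSum P ≤ Ind P 1) h

lemma L1 (ρ : Representation ℂ P V) (h : ∀ g, g ≠ 1 → tr (ρ g) = 0) :
    (fun g => tr (ρ g)) ∈ Ind P (Nat.card P) ∧ Nat.card P ∣ Module.finrank ℂ V := by
  obtain ⟨n, hn⟩ := mult_hom ρ 1
  rw [Finset.sum_eq_single 1 (fun g _ hg => by rw [h g hg, zero_mul]) (by simp)] at hn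
  simp at hn
  constructor
  · have h2 : inducedChar (⊥ : Subgroup P) (fun x => (1 : _ →* ℂ) x) ∈ Ind P (Nat.card P) :=
      AddSubmonoid.subset_closure ⟨⊥, _, irr_hom 1, by simp, rfl⟩
    have : (fun g => tr (ρ g)) = n • inducedChar (⊥ : Subgroup P) (fun x => (1 : _ →* ℂ) x) := by
      ext g
      by_cases hg : g = 1
      · subst hg
        simp [inducedChar, hn, mul_comm]
      · simp [inducedChar, h g hg, hg]
    rw [this]
    exact nsmul_mem h2 n
  · refine ⟨n, ?_⟩
    rw [Nat.card_eq_fintype_card]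
    exact_mod_cast hn
end
end SFP

namespace SFP
noncomputable section
set_option linter.unusedSectionVars false
variable {V : Type} [AddCommGroup V] [Module ℂ V] [FiniteDimensional ℂ V]
variable {P : Type} [Group P] [Fintype P]

lemma card_two {H : Subgroup P} (h2 : H.index = 2) : (Fintype.card P : ℂ) = Fintype.card H * 2 := by
  have := H.card_mul_index
  rw [h2, Nat.card_eq_fintype_card, Nat.card_eq_fintype_card] at this
  exact_mod_cast this.symm

lemma conj_mem_two {H : Subgroup P} (h2 : H.index = 2) (x g : P) : x * g * x⁻¹ ∈ H ↔ g ∈ H := by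
  have := Subgroup.normal_of_index_eq_two h2
  exact this.mem_comm_iff.trans (by simp)

lemma ind_two {H : Subgroup P} (h2 : H.index = 2) (Λ : P →* ℂ) :
    (fun g => if g ∈ H then 2 * Λ g else 0) ∈ Ind P 2 := by
  refine AddSubmonoid.subset_closure ⟨H, fun x => (Λ.comp H.subtype) x, irr_hom _, h2.symm, ?_⟩
  ext g
  unfold inducedChar
  simp only [conj_mem_two h2]
  by_cases hg : g ∈ H
  · simp only [hg, dite_true, if_true]
    have : ∀ x, (Λ.comp H.subtype) ⟨x * g * x⁻¹, (conj_mem_two h2 x g).2 hg⟩ = Λ g := by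
      intro x
      simp only [MonoidHom.comp_apply, Subgroup.subtype_apply, map_mul]
      rw [mul_comm (Λ x), mul_assoc, ← map_mul]; simp
    simp only [this]
    rw [Finset.sum_const, Finset.card_univ, nsmul_eq_mul, card_two h2]
    have : (Fintype.card H : ℂ) ≠ 0 := by simp
    field_simp
  · simp [hg]

lemma dih_conj {C : Subgroup P} (h2 : C.index = 2) (hinv : ∀ x, x ∉ C → x * x = 1) {s x : P} (hs : s ∉ C)
    (hx : x ∈ C) : s * x * s⁻¹ = x⁻¹ := by
  have h1 := hinv s hs
  have h3 : s * x ∉ C := by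
    rw [Subgroup.mul_mem_iff_of_index_two h2]; tauto
  have h4 := hinv _ h3
  rw [← mul_eq_one_iff_eq_inv, ← eq_inv_iff_mul_eq_one.2 h1]
  simpa [mul_assoc] using h4

lemma ind_C {C : Subgroup P} (h2 : C.index = 2) (hinv : ∀ x, x ∉ C → x * x = 1)
    (hcom : ∀ x ∈ C, ∀ y ∈ C, x * y = y * x) (θ : C →* ℂ) :
    (fun g => if h : g ∈ C then θ ⟨g, h⟩ + θ ⟨g, h⟩⁻¹ else 0) ∈ Ind P 2 := by
  refine AddSubmonoid.subset_closure ⟨C, fun x => θ x, irr_hom _, h2.symm, ?_⟩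
  ext g
  unfold inducedChar
  by_cases hg : g ∈ C
  · simp only [hg, dite_true]
    have : ∀ x, (if h : x * g * x⁻¹ ∈ C then θ ⟨x * g * x⁻¹, h⟩ else 0) =
        if x ∈ C then θ ⟨g, hg⟩ else θ ⟨g, hg⟩⁻¹ := by
      intro x
      rw [dif_pos ((conj_mem_two h2 x g).2 hg)]
      by_cases hx : x ∈ C
      · rw [if_pos hx]
        congr 2
        rw [hcom x hx g hg]; simp
      · rw [if_neg hx]
        congr 2
        rw [dih_conj h2 hinv hx hg]
    simp only [this]
    rw [Finset.sum_ite, Finset.sum_const, Finset.sum_const, nsmul_eq_mul, nsmul_eq_mul]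
    have e1 : (Finset.univ.filter (fun x => x ∈ C)).card = Fintype.card C :=
      (Fintype.card_subtype _).symm
    have e2 := Finset.card_filter_add_card_filter_not (s := (Finset.univ : Finset P)) (fun x => x ∈ C)
    rw [e1, Finset.card_univ] at e2
    have e3 : ((Finset.univ.filter (fun x => x ∉ C)).card : ℂ) = Fintype.card C := by
      have := card_two h2
      rw [← e2] at this
      push_cast at this
      linear_combination this
    rw [e1, e3]
    have : (Fintype.card C : ℂ) ≠ 0 := by simp
    field_simp
  · simp [conj_mem_two h2, hg]

/-- extension of a sign character of the rotation subgroup -/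
lemma dih_ext {C : Subgroup P} (h2 : C.index = 2) (hinv : ∀ x, x ∉ C → x * x = 1)
    (κ : C →* ℂˣ) (hκ : ∀ c, κ c * κ c = 1) {s : P} (hs : s ∉ C) :
    ∃ ε : P →* ℂˣ, ∀ c : C, ε c = κ c ∧ ε (s * c) = κ c := by
  have hss : s⁻¹ * s⁻¹ = 1 := by simpa using congrArg (·⁻¹) (hinv s hs)
  have hC : ∀ x, x ∉ C → s⁻¹ * x ∈ C := by
    intro x hx
    rw [Subgroup.mul_mem_iff_of_index_two h2]; simp [hs, hx]
  let f : P → ℂˣ := fun x => if h : x ∈ C then κ ⟨x, h⟩ else κ ⟨s⁻¹ * x, Subgroup.mul_mem_iff_of_index_two h2 |>.2 (by simp [hs, h])⟩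
  have f1 : ∀ c : C, f c = κ c := fun c => by simp [f]
  have hsc : ∀ c : C, s * c ∉ C := fun c => by
    rw [Subgroup.mul_mem_iff_of_index_two h2]; simp [hs]
  have f2 : ∀ c : C, f (s * c) = κ c := fun c => by
    simp only [f]
    rw [dif_neg (hsc c)]
    congr 1; ext; simp
  have cases : ∀ x : P, (∃ c : C, x = c) ∨ ∃ c : C, x = s * c := by
    intro x
    by_cases hx : x ∈ C
    · exact .inl ⟨⟨x, hx⟩, rfl⟩
    · exact .inr ⟨⟨s⁻¹ * x, hC x hx⟩, by simp⟩
  have hki : ∀ c, κ c⁻¹ = κ c := fun c => by rw [map_inv]; exact (eq_inv_of_mul_eq_one_left (hκ c)).symm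
  have hsi : s⁻¹ = s := by rw [inv_eq_iff_mul_eq_one]; exact hinv s hs
  refine ⟨⟨⟨f, ?_⟩, ?_⟩, fun c => ⟨f1 c, f2 c⟩⟩
  · have := f1 1; simpa using this
  · intro x y
    show f (x * y) = f x * f y
    rcases cases x with ⟨a, rfl⟩ | ⟨a, rfl⟩ <;> rcases cases y with ⟨b, rfl⟩ | ⟨b, rfl⟩
    · rw [f1, f1, ← map_mul, ← f1]; rfl
    · have := dih_conj h2 hinv hs a.2
      have e : (a : P) * (s * b) = s * ((a⁻¹ * b : C) : P) := by
        push_cast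
        rw [← this, hsi]
        have := hinv s hs
        simp only [← mul_assoc]; rw [this]; simp
      rw [e, f1, f2, f2, map_mul, hki]
    · have e : s * (a : P) * b = s * ((a * b : C) : P) := by push_cast; group
      rw [e, f1, f2, f2, map_mul]
    · have := dih_conj h2 hinv hs a.2
      have e : s * (a : P) * (s * b) = ((a⁻¹ * b : C) : P) := by
        push_cast
        rw [← this, hsi]; group
      rw [e, f1, f2, f2, map_mul, hki]

lemma sgn_hom {C : Subgroup P} (h2 : C.index = 2) :
    ∃ ε : P →* ℂˣ, ∀ x, ε x = if x ∈ C then 1 else -1 := by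
  refine ⟨⟨⟨fun x => if x ∈ C then 1 else -1, by simp⟩, ?_⟩, fun x => rfl⟩
  intro x y
  simp only [Subgroup.mul_mem_iff_of_index_two h2]
  by_cases hx : x ∈ C <;> by_cases hy : y ∈ C <;> simp [hx, hy]

lemma ind_ker (ε : P →* ℂˣ) (hε : ∀ x, ε x * ε x = 1) {c0 : P} (hc : ε c0 = -1) (Λ : P →* ℂ) :
    (fun g => (1 + (ε g : ℂ)) * Λ g) ∈ Ind P 2 := by
  have hx : ∀ x, ε x = 1 ∨ ε x = -1 := by
    intro x
    have := congrArg (Units.val) (hε x)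
    simp only [Units.val_mul, Units.val_one, mul_self_eq_one_iff] at this
    rcases this with h | h
    · left; ext; exact h
    · right; ext; simpa using h
  have hn : (-1 : ℂˣ) ≠ 1 := by
    intro h
    have := congrArg Units.val h
    norm_num at this
  have h2 : ε.ker.index = 2 := by
    rw [Subgroup.index_eq_two_iff]
    refine ⟨c0, fun b => ?_⟩
    simp only [MonoidHom.mem_ker, map_mul, hc]
    rcases hx b with h | h <;> simp [h, hn, Xor]
  convert ind_two h2 Λ using 2 with g
  rcases hx g with h | h
  · simp [MonoidHom.mem_ker, h]; norm_num
  · simp [MonoidHom.mem_ker, h, hn]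
end
end SFP

namespace SFP
noncomputable section
set_option linter.unusedSectionVars false
variable {V : Type} [AddCommGroup V] [Module ℂ V] [FiniteDimensional ℂ V]
variable {P : Type} [Group P] [Fintype P]

lemma sum_split {C : Subgroup P} (h2 : C.index = 2) {s : P} (hs : s ∉ C) (f : P → ℂ) :
    ∑ x, f x = ∑ c : C, f c + ∑ c : C, f (s * c) := by
  rw [show ∑ c : C, f c + ∑ c : C, f (s * c) = ∑ x : C ⊕ C, Sum.elim (fun c : C => f c) (fun c : C => f (s * c)) x by
    rw [Fintype.sum_sum_type]; rfl]
  symm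
  have hsc : ∀ c : C, s * c ∉ C := fun c => by
    rw [Subgroup.mul_mem_iff_of_index_two h2]; simp [hs]
  refine Fintype.sum_bijective (Sum.elim (fun c : C => (c : P)) (fun c : C => s * c)) ⟨?_, ?_⟩ _ _ ?_
  · rintro (a | a) (b | b) h
    · simpa using h
    · simp at h
      exact absurd a.2 (h ▸ hsc b)
    · simp at h
      exact absurd b.2 (h ▸ hsc a)
    · simpa using h
  · intro x
    by_cases hx : x ∈ C
    · exact ⟨.inl ⟨x, hx⟩, rfl⟩
    · exact ⟨.inr ⟨s⁻¹ * x, Subgroup.mul_mem_iff_of_index_two h2 |>.2 (by simp [hs, hx])⟩, by simp⟩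
  · rintro (a | a) <;> rfl

lemma half_sum {X : Type} [Fintype X] [Group X] (m : X → ℕ) (hm : ∀ x, m x⁻¹ = m x)
    {k : X} (hk1 : k ≠ 1) (hk : k⁻¹ = k) (hX : ∀ x : X, x⁻¹ = x → x = 1 ∨ x = k) :
    ∃ S : Finset X, (∀ f : X → ℂ, ∑ x, m x * f x = m 1 * f 1 + m k * f k + ∑ x ∈ S, m x * (f x + f x⁻¹)) := by
  let e := Fintype.equivFin X
  refine ⟨Finset.univ.filter fun x => e x < e x⁻¹, fun f => ?_⟩
  have h1 : ∑ x, (m x : ℂ) * f x = ∑ x ∈ Finset.univ.filter (fun x => e x < e x⁻¹), m x * f x +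
      (∑ x ∈ Finset.univ.filter (fun x => e x⁻¹ < e x), m x * f x +
       ∑ x ∈ Finset.univ.filter (fun x => x⁻¹ = x), m x * f x) := by
    rw [Finset.sum_filter, Finset.sum_filter, Finset.sum_filter, ← Finset.sum_add_distrib, ← Finset.sum_add_distrib]
    refine Finset.sum_congr rfl fun x _ => ?_
    have hx : x⁻¹ = x ↔ e x⁻¹ = e x := by simp
    rcases lt_trichotomy (e x) (e x⁻¹) with h | h | h
    · have := h.ne'
      simp [hx, h, h.le, this, -EmbeddingLike.apply_eq_iff_eq]
    · simp [hx, h, -EmbeddingLike.apply_eq_iff_eq]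
    · have := h.ne
      simp [hx, h, h.le, this, -EmbeddingLike.apply_eq_iff_eq]
  have h2 : ∑ x ∈ Finset.univ.filter (fun x => e x⁻¹ < e x), (m x : ℂ) * f x =
      ∑ x ∈ Finset.univ.filter (fun x => e x < e x⁻¹), m x * f x⁻¹ := by
    refine Finset.sum_nbij' (·⁻¹) (·⁻¹) ?_ ?_ ?_ ?_ ?_
    · intro x; simp
    · intro x; simp
    · intro x; simp
    · intro x; simp
    · intro x; simp [hm]
  have h3 : Finset.univ.filter (fun x : X => x⁻¹ = x) = {1, k} := by
    ext x
    simp only [Finset.mem_filter, Finset.mem_univ, true_and, Finset.mem_insert, Finset.mem_singleton]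
    refine ⟨hX x, ?_⟩
    rintro (rfl | rfl)
    · simp
    · exact hk
  rw [h1, h2, h3, Finset.sum_pair hk1.symm, Finset.sum_congr rfl fun x _ => mul_add _ _ _, Finset.sum_add_distrib]
  ring

/-- data of the multiplicities for the cyclic rotation group -/
lemma dih_mult {C : Type} [CommGroup C] [Fintype C] (c0 : C) (hgen : ∀ c : C, c ∈ Subgroup.zpowers c0)
    (κ : C →* ℂˣ) (hκ : κ c0 = -1) (ρ : Representation ℂ C V) (hsym : ∀ c, tr (ρ c⁻¹) = tr (ρ c)) :
    ∃ (N1 Nk : ℕ) (I : Type) (S : Finset I) (m : I → ℕ) (θ : I → (C →* ℂ)),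
      (∑ c, tr (ρ c) = Fintype.card C * N1) ∧ (∑ c, tr (ρ c) * κ c = Fintype.card C * Nk) ∧
      (∑ c, (κ c : ℂ) = 0) ∧
      ∀ c, tr (ρ c) = N1 + Nk * κ c + ∑ i ∈ S, m i * (θ i c + θ i c⁻¹) := by
  have : Fintype (Additive C) := inferInstanceAs (Fintype C)
  let r := toAdd ρ
  obtain ⟨m, hm1, hm2⟩ := exists_mult r 1 (by simp) (by simp)
  have hr : ∀ c, tr (r c * 1) = tr (ρ c.toMul) := by intro c; simp [r, toAdd]
  let k : AddChar (Additive C) ℂ := ⟨fun c => (κ c.toMul : ℂ), by simp, by simp⟩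
  have hm3 : ∀ ψ, (Fintype.card C : ℂ) * m ψ = ∑ c : C, tr (ρ c) * ψ (Additive.ofMul c⁻¹) := by
    intro ψ
    rw [hm1, wt, mul_one, map_smul, map_sum, smul_eq_mul]
    have e : (Fintype.card (Additive C) : ℂ) = Fintype.card C := by
      congr 1; exact Fintype.card_congr Additive.toMul
    rw [e, ← mul_assoc, mul_inv_cancel₀ (by simp), one_mul]
    refine Fintype.sum_equiv Additive.toMul _ _ fun x => ?_
    rw [map_smul, smul_eq_mul, mul_comm]; rfl
  have hmi : ∀ ψ, m ψ⁻¹ = m ψ := by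
    intro ψ
    have : (Fintype.card C : ℂ) * m ψ⁻¹ = Fintype.card C * m ψ := by
      rw [hm3, hm3]
      refine Fintype.sum_equiv (Equiv.inv C) _ _ fun x => ?_
      simp [hsym]
    have h0 : (Fintype.card C : ℂ) ≠ 0 := by simp
    exact_mod_cast mul_left_cancel₀ h0 this
  have hext : ∀ ψ φ : AddChar (Additive C) ℂ, ψ (Additive.ofMul c0) = φ (Additive.ofMul c0) → ψ = φ := by
    intro ψ φ h
    have : Function.Surjective (fun n : ℤ => c0 ^ n) := fun c => hgen c
    ext c
    obtain ⟨n, hn⟩ := this c.toMul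
    have : c = n • Additive.ofMul c0 := by
      apply Additive.toMul.injective; rw [← hn]; rfl
    rw [this, AddChar.map_zsmul_eq_zpow, AddChar.map_zsmul_eq_zpow, h]
  have hk0 : k (Additive.ofMul c0) = -1 := by
    show ((κ c0 : ℂˣ) : ℂ) = -1
    rw [hκ]; simp
  have hk1 : k ≠ 1 := by
    intro h
    rw [h] at hk0; norm_num at hk0
  have hki : k⁻¹ = k := by
    apply hext
    rw [AddChar.inv_apply, AddChar.map_neg_eq_inv, hk0]; norm_num
  obtain ⟨S, hS⟩ := half_sum m hmi hk1 hki (by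
    intro ψ h
    have h2 : (ψ (Additive.ofMul c0)) * (ψ (Additive.ofMul c0)) = 1 := by
      have h5 := DFunLike.congr_fun (inv_mul_cancel ψ) (Additive.ofMul c0)
      rw [AddChar.mul_apply, h] at h5
      exact h5
    rcases mul_self_eq_one_iff.1 h2 with h3 | h3
    · left; apply hext; rw [h3]; rfl
    · right; apply hext; rw [h3, hk0])
  refine ⟨m 1, m k, _, S, m, fun ψ => ⟨⟨fun c => ψ (Additive.ofMul c), ?_⟩, ?_⟩, ?_, ?_, ?_, ?_⟩
  · exact ψ.map_zero_eq_one
  · exact fun a b => ψ.map_add_eq_mul _ _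
  · rw [hm3]; simp
  · rw [hm3]
    refine Finset.sum_congr rfl fun c _ => ?_
    congr 1
    have : k (Additive.ofMul c⁻¹) = k⁻¹ (Additive.ofMul c) := by
      rw [AddChar.inv_apply]; rfl
    rw [this, hki]; rfl
  · have := AddChar.sum_eq_zero_of_ne_one hk1
    rw [← this]
    exact Fintype.sum_equiv Additive.ofMul _ _ fun x => rfl
  · intro c
    have := hm2 (Additive.ofMul c)
    rw [hr] at this
    rw [show tr (ρ c) = _ from this, hS fun ψ => ψ (Additive.ofMul c)]
    simp only [AddChar.inv_apply]
    simp
    exact Or.inl rfl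

lemma dihedral {C : Subgroup P} (h2 : C.index = 2) (hinv : ∀ x, x ∉ C → x * x = 1)
    (c0 : C) (hgen : ∀ c : C, c ∈ Subgroup.zpowers c0)
    (κ : C →* ℂˣ) (hκ : κ c0 = -1) (ρ : Representation ℂ P V) (v : ℂ)
    (hv : ∀ x, x ∉ C → tr (ρ x) = v) (hvn : ‖v‖ ≤ 2) (hd : Even (Module.finrank ℂ V))
    (hn : ∑ c : C, tr (ρ c) * (κ c : ℂ) ≠ 0) : (fun g => tr (ρ g)) ∈ Ind P 2 := by
  have hcomC : ∀ a b : C, a * b = b * a := by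
    intro a b
    obtain ⟨i, rfl⟩ := hgen a
    obtain ⟨j, rfl⟩ := hgen b
    exact zpow_mul_comm c0 i j
  have hcom : ∀ x ∈ C, ∀ y ∈ C, x * y = y * x := fun x hx y hy =>
    congrArg Subtype.val (hcomC ⟨x, hx⟩ ⟨y, hy⟩)
  let _ : CommGroup C := { (inferInstance : Group C) with mul_comm := hcomC }
  obtain ⟨s, hs⟩ : ∃ s, s ∉ C := by
    by_contra h
    push Not at h
    have : C = ⊤ := by ext x; simp [h x]
    rw [this] at h2; simp at h2
  have hsc : ∀ c : C, s * c ∉ C := fun c => by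
    rw [Subgroup.mul_mem_iff_of_index_two h2]; simp [hs]
  obtain ⟨N1, Nk, I, S, m, θ, e1, e2, e3, e4⟩ := dih_mult c0 hgen κ hκ
    (ρ.comp C.subtype : Representation ℂ C V) (by
      intro c
      have h1 := dih_conj h2 hinv hs c.2
      have h3 := tr_conj ρ s c
      rw [h1] at h3
      exact h3)
  have e1 : ∑ c : C, tr (ρ c) = Fintype.card C * N1 := e1
  have e2 : ∑ c : C, tr (ρ c) * κ c = Fintype.card C * Nk := e2
  have e4 : ∀ c : C, tr (ρ c) = N1 + Nk * κ c + ∑ i ∈ S, m i * (θ i c + θ i c⁻¹) := e4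
  have hκ2 : ∀ c, κ c * κ c = 1 := by
    intro c
    obtain ⟨i, rfl⟩ := hgen c
    simp only [map_zpow, hκ, ← mul_zpow]
    simp
  obtain ⟨ε, hε⟩ := dih_ext h2 hinv κ hκ2 hs
  obtain ⟨σ, hσ⟩ := sgn_hom h2
  have hcC : (Fintype.card C : ℂ) ≠ 0 := by simp
  have hε2 : ∀ x, ε x * ε x = 1 := by
    intro x
    by_cases hx : x ∈ C
    · rw [(hε ⟨x, hx⟩).1, hκ2]
    · have := (hε ⟨s⁻¹ * x, Subgroup.mul_mem_iff_of_index_two h2 |>.2 (by simp [hs, hx])⟩).2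
      simp only [mul_inv_cancel_left] at this
      rw [this, hκ2]
  have inv_sq : ∀ x : ℂˣ, x * x = 1 → x⁻¹ = x := fun x h => inv_eq_of_mul_eq_one_left h
  obtain ⟨a, ha⟩ := mult_hom ρ 1
  obtain ⟨b, hb⟩ := mult_hom ρ σ
  obtain ⟨e, he⟩ := mult_hom ρ ε
  rw [sum_split h2 hs, card_two h2] at ha hb he
  have ha' : (N1 : ℂ) + v = 2 * a := by
    simp only [MonoidHom.one_apply, Units.val_one, mul_one, e1, hv _ (hsc _), Finset.sum_const,
      Finset.card_univ, nsmul_eq_mul] at ha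
    apply mul_left_cancel₀ hcC
    linear_combination ha
  have hb' : (N1 : ℂ) - v = 2 * b := by
    simp only [hσ, inv_mem_iff, SetLike.coe_mem, hsc, if_true, if_false, Units.val_neg, Units.val_one, mul_one, e1, hv _ (hsc _), Finset.sum_const,
      Finset.card_univ, nsmul_eq_mul] at hb
    apply mul_left_cancel₀ hcC
    linear_combination hb
  have he' : (Nk : ℂ) = 2 * e := by
    simp only [map_inv, inv_sq _ (hε2 _), inv_sq _ (hκ2 _), (hε _).1, (hε _).2, e2, hv _ (hsc _), ← Finset.mul_sum, e3] at he
    apply mul_left_cancel₀ hcC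
    linear_combination he
  have hN1 : N1 = a + b := by
    have : (N1 : ℂ) = a + b := by linear_combination (ha' + hb') / 2
    exact_mod_cast this
  have hNk : Nk = 2 * e := by exact_mod_cast he'
  have hvab : v = a - b := by linear_combination (ha' - hb') / 2
  have he0 : e ≠ 0 := by
    rintro rfl
    apply hn
    rw [e2, hNk]; simp
  have hab : Even (a + b) := by
    have h1 := e4 1
    simp only [inv_one, map_one (θ _), map_one κ, Subgroup.coe_one, map_one ρ] at h1
    rw [show tr (1 : Module.End ℂ V) = Module.finrank ℂ V by simp] at h1
    have h3 : Module.finrank ℂ V = N1 + Nk + 2 * ∑ i ∈ S, m i := by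
      have : (Module.finrank ℂ V : ℂ) = N1 + Nk + 2 * ∑ i ∈ S, (m i : ℂ) := by
        rw [h1, Finset.mul_sum]
        simp only [Units.val_one, mul_one]
        congr 1
        exact Finset.sum_congr rfl fun i _ => by ring
      exact_mod_cast this
    rw [h3, hN1, hNk] at hd
    rcases hd with ⟨w, hw⟩
    exact ⟨w - e - ∑ i ∈ S, m i, by omega⟩
  have hab2 : |(a : ℤ) - b| ≤ 2 := by
    have : ‖((a - b : ℤ) : ℂ)‖ ≤ 2 := by push_cast; rwa [← hvab]
    rw [Complex.norm_intCast] at this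
    exact_mod_cast this
  -- building blocks
  have F1 := ind_C h2 hinv hcom 1
  have Fk := ind_C h2 hinv hcom ((Units.coeHom ℂ).comp κ)
  have FS : (fun g => if h : g ∈ C then ∑ i ∈ S, (m i : ℂ) * (θ i ⟨g, h⟩ + θ i ⟨g, h⟩⁻¹) else 0) ∈ Ind P 2 := by
    have : (∑ i ∈ S, m i • fun g => if h : g ∈ C then (θ i ⟨g, h⟩ + θ i ⟨g, h⟩⁻¹) else 0) ∈ Ind P 2 :=
      sum_mem fun i _ => nsmul_mem (ind_C h2 hinv hcom (θ i)) _
    convert this using 1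
    ext g
    by_cases hg : g ∈ C <;> simp [hg, Finset.sum_apply]
  have hε0 : ε c0 = -1 := by rw [(hε c0).1, hκ]
  have D1 := fun Λ => ind_ker ε hε2 hε0 Λ
  have D2 := fun Λ => ind_ker (ε * σ) (by
    intro x
    rw [MonoidHom.mul_apply, mul_mul_mul_comm, hε2, hσ]
    split_ifs <;> simp) (c0 := c0) (by simp [hε0, hσ]) Λ
  have hki : ∀ c : C, κ c⁻¹ = κ c := fun c => by rw [map_inv, inv_sq _ (hκ2 _)]
  have hεC : ∀ (g) (hg : g ∈ C), ε g = κ ⟨g, hg⟩ := fun g hg => (hε ⟨g, hg⟩).1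
  have e4' : ∀ (g) (hg : g ∈ C), tr (ρ g) = N1 + Nk * κ ⟨g, hg⟩ +
    ∑ i ∈ S, m i * (θ i ⟨g, hg⟩ + θ i ⟨g, hg⟩⁻¹) := fun g hg => e4 ⟨g, hg⟩
  have cases3 : a = b ∨ a = b + 2 ∨ b = a + 2 := by
    rw [abs_le] at hab2
    rcases hab with ⟨w, hw⟩
    omega
  obtain ⟨e', rfl⟩ : ∃ e', e = e' + 1 := ⟨e - 1, by omega⟩
  rcases cases3 with h | h | h
  · convert add_mem (add_mem FS (nsmul_mem F1 a)) (nsmul_mem Fk (e' + 1)) using 1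
    ext g
    by_cases hg : g ∈ C
    · simp only [Pi.add_apply, Pi.smul_apply, dif_pos hg, e4' g hg, hN1, hNk, MonoidHom.comp_apply,
        hki, Units.coeHom_apply, MonoidHom.one_apply]
      simp only [nsmul_eq_mul]
      rw [h]; push_cast; ring
    · simp only [Pi.add_apply, Pi.smul_apply, dif_neg hg, hv g hg, hvab, h]
      simp
  · convert add_mem (add_mem (add_mem FS (nsmul_mem F1 b)) (nsmul_mem Fk e')) (add_mem (D1 1) (D2 1)) using 1
    ext g
    by_cases hg : g ∈ C
    · simp only [Pi.add_apply, Pi.smul_apply, dif_pos hg, e4' g hg, hN1, hNk, MonoidHom.comp_apply,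
        hki, Units.coeHom_apply, MonoidHom.one_apply, MonoidHom.mul_apply, hεC g hg, hσ, if_pos hg]
      simp only [nsmul_eq_mul]
      rw [h]; push_cast; ring
    · simp only [Pi.add_apply, Pi.smul_apply, dif_neg hg, hv g hg, hvab, h, MonoidHom.mul_apply,
        hσ, if_neg hg, MonoidHom.one_apply]
      simp; ring
  · convert add_mem (add_mem (add_mem FS (nsmul_mem F1 a)) (nsmul_mem Fk e'))
      (add_mem (D1 ((Units.coeHom ℂ).comp σ)) (D2 ((Units.coeHom ℂ).comp σ))) using 1
    ext g
    by_cases hg : g ∈ C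
    · simp only [Pi.add_apply, Pi.smul_apply, dif_pos hg, e4' g hg, hN1, hNk, MonoidHom.comp_apply,
        hki, Units.coeHom_apply, MonoidHom.one_apply, MonoidHom.mul_apply, hεC g hg, hσ, if_pos hg]
      simp only [nsmul_eq_mul]
      rw [h]; push_cast; ring
    · simp only [Pi.add_apply, Pi.smul_apply, dif_neg hg, hv g hg, hvab, h, MonoidHom.mul_apply,
        hσ, if_neg hg, MonoidHom.one_apply, MonoidHom.comp_apply, Units.coeHom_apply]
      simp; ring
end
end SFP

namespace SFP
noncomputable section
set_option linter.unusedSectionVars false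
variable {V : Type} [AddCommGroup V] [Module ℂ V] [FiniteDimensional ℂ V]
variable {G : Type} [Group G] [Fintype G] {p : ℕ} [Fact p.Prime]

lemma sum_fiber {A B : Type} [Group A] [Fintype A] [Group B] [Fintype B] (f : A →* B)
    (hf : Function.Surjective f) {M : Type} [AddCommMonoid M] (g : B → M) :
    ∑ a, g (f a) = Nat.card f.ker • ∑ b, g b := by
  rw [← Finset.sum_fiberwise (s := Finset.univ) (g := f), Finset.smul_sum]
  refine Finset.sum_congr rfl fun b _ => ?_
  rw [Finset.sum_congr rfl (g := fun _ => g b) (fun a ha => by rw [(Finset.mem_filter.1 ha).2]),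
    Finset.sum_const]
  congr 1
  obtain ⟨a0, rfl⟩ := hf b
  rw [Nat.card_eq_fintype_card, ← Fintype.card_subtype]
  refine Fintype.card_congr ⟨fun a => ⟨a0⁻¹ * a, by simp [MonoidHom.mem_ker, a.2]⟩,
    fun a => ⟨a0 * a, by simp [MonoidHom.mem_ker.1 a.2]⟩, fun a => by simp, fun a => by simp⟩

lemma sylow_conj (P : Sylow p G) (H : Subgroup G) (hH : ¬ p ∣ H.index) :
    ∃ g : G, ∀ x ∈ P, g * x * g⁻¹ ∈ H := by
  have hP : IsPGroup p P := P.2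
  obtain ⟨a, ha⟩ := hP.nonempty_fixed_point_of_prime_not_dvd_card (G ⧸ H) hH
  obtain ⟨g, rfl⟩ := QuotientGroup.mk_surjective a
  refine ⟨g⁻¹, fun x hx => ?_⟩
  have := ha ⟨x⁻¹, inv_mem hx⟩
  have h2 : ((x⁻¹ * g : G) : G ⧸ H) = g := this
  rw [QuotientGroup.eq] at h2
  simpa [mul_assoc] using h2

/-- restriction of a representation along a homomorphism -/
def pull {A B : Type} [Group A] [Group B] (ρ : Representation ℂ B V) (f : A →* B) :
    Representation ℂ A V := MonoidHom.comp ρ f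

@[simp] lemma pull_apply {A B : Type} [Group A] [Group B] (ρ : Representation ℂ B V) (f : A →* B) (a : A) :
    pull ρ f a = ρ (f a) := rfl

lemma fin_coprime (P : Sylow p G) (ρ : Representation ℂ G V) (h : ¬ p ∣ Module.finrank ℂ V) :
    SumInducedProperty p (P : Subgroup G) (fun g => tr (ρ g)) (Module.finrank ℂ V) := by
  apply sip_of_mem
  rw [Nat.factorization_eq_zero_of_not_dvd h, pow_zero]
  exact L0 (pull ρ (P : Subgroup G).subtype)

lemma fin_vanish (P : Sylow p G) (ρ : Representation ℂ G V) (hd : Module.finrank ℂ V ∣ Nat.card G)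
    (h : ∀ x ∈ P, x ≠ 1 → tr (ρ x) = 0) :
    SumInducedProperty p (P : Subgroup G) (fun g => tr (ρ g)) (Module.finrank ℂ V) := by
  apply sip_of_mem
  obtain ⟨h1, h2⟩ := L1 (pull ρ (P : Subgroup G).subtype)
    (fun g hg => h g g.2 (by simpa using hg))
  have hp : p.Prime := Fact.out
  have hc : Nat.card P = p ^ (Nat.card G).factorization p := P.card_eq_multiplicity
  have hG : Nat.card G ≠ 0 := by simp
  have hd0 : Module.finrank ℂ V ≠ 0 := fun h => by rw [h, zero_dvd_iff] at hd; exact hG hd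
  have : Nat.card P = p ^ (Module.finrank ℂ V).factorization p := by
    rw [hc]
    congr 1
    apply le_antisymm
    · rw [← hp.pow_dvd_iff_le_factorization hd0, ← hc]; exact h2
    · exact (Nat.factorization_le_iff_dvd hd0 hG).2 hd p
  rw [← this]
  exact h1

lemma fin_dihedral (P : Sylow 2 G) (ρ : Representation ℂ G V) (T N : Subgroup G) (hN : ¬ 2 ∣ N.index)
    (hT : IsCyclic T) (hTN : ∀ x ∈ N, ∀ y ∈ N, x ∉ T → y ∉ T → x * y ∈ T) (v : ℂ)
    (hoff : ∀ x ∈ N, x ∉ T → x * x = 1 ∧ tr (ρ x) = v) (hv : ‖v‖ ≤ 2) (hcT : 2 * Nat.card T ∣ Nat.card G)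
    (h4 : 4 ∣ Nat.card G) (hd : Module.finrank ℂ V % 4 = 2)
    (hb : ∑ x : T, (if (x : G) = 1 then 0 else ‖tr (ρ x)‖) < (Module.finrank ℂ V : ℝ)) :
    SumInducedProperty 2 (P : Subgroup G) (fun g => tr (ρ g)) (Module.finrank ℂ V) := by
  apply sip_of_mem
  have hd0 : Module.finrank ℂ V ≠ 0 := by omega
  have hd1 : (Module.finrank ℂ V).factorization 2 = 1 := by
    apply le_antisymm
    · by_contra hlt
      push Not at hlt
      have := (Nat.prime_two.pow_dvd_iff_le_factorization hd0 (k := 2)).2 hlt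
      omega
    · have := (Nat.prime_two.pow_dvd_iff_le_factorization hd0 (k := 1)).1 (by omega)
      exact this
  rw [hd1, pow_one]
  obtain ⟨g, hg⟩ := sylow_conj P N hN
  let φ : (P : Subgroup G) →* G := (MulAut.conj g).toMonoidHom.comp (P : Subgroup G).subtype
  have hφ : ∀ x, φ x = g * x * g⁻¹ := fun x => rfl
  have hφi : Function.Injective φ := fun x y h => by
    rw [hφ, hφ] at h; simpa using h
  have hφN : ∀ x, φ x ∈ N := fun x => hg x x.2
  have hφt : ∀ x, tr (ρ (φ x)) = tr (ρ x) := fun x => by rw [hφ, tr_conj]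
  let C : Subgroup (P : Subgroup G) := T.comap φ
  have hcP : Nat.card P = 2 ^ (Nat.card G).factorization 2 := P.card_eq_multiplicity
  have hG : Nat.card G ≠ 0 := by simp
  let j : C →* T := φ.subgroupComap T
  have hji : Function.Injective j := fun a b h => by
    have : φ a = φ b := congrArg Subtype.val h
    exact Subtype.ext (hφi this)
  obtain ⟨s, hs⟩ : ∃ s, s ∉ C := by
    by_contra hc
    push Not at hc
    have hCT : C = ⊤ := by ext x; simp [hc x]
    have h1 : Nat.card C ∣ Nat.card T := Subgroup.card_dvd_of_injective j hji
    rw [hCT, Subgroup.card_top] at h1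
    have h3 : 2 ^ ((Nat.card G).factorization 2 + 1) ∣ Nat.card G := by
      have h1' : Nat.card P ∣ Nat.card T := h1
      refine dvd_trans ?_ hcT
      rw [pow_succ', ← hcP]
      exact mul_dvd_mul_left 2 h1'
    have := (Nat.prime_two.pow_dvd_iff_le_factorization hG).1 h3
    omega
  have h2 : C.index = 2 := by
    rw [Subgroup.index_eq_two_iff]
    refine ⟨s, fun b => ?_⟩
    by_cases hbC : b ∈ C
    · refine .inr ⟨hbC, fun h => hs ?_⟩
      rwa [mul_mem_cancel_left hbC] at h
    · refine .inl ⟨?_, hbC⟩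
      show φ (b * s) ∈ T
      rw [map_mul]
      exact hTN _ (hφN b) _ (hφN s) hbC hs
  have hCe : 2 ∣ Nat.card C := by
    have h1 := C.card_mul_index
    rw [h2] at h1
    have h3 : 4 ∣ Nat.card P := by
      rw [hcP, show 4 = 2 ^ 2 by norm_num]
      exact pow_dvd_pow 2 ((Nat.prime_two.pow_dvd_iff_le_factorization hG).1 h4)
    have h3' : 4 ∣ Nat.card (P : Subgroup G) := h3
    omega
  have : IsCyclic C := isCyclic_of_injective j hji
  obtain ⟨c0, hc0⟩ := IsCyclic.exists_generator (α := C)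
  have hord : orderOf (-1 : ℂˣ) ∣ orderOf c0 := by
    rw [orderOf_eq_card_of_forall_mem_zpowers hc0]
    refine dvd_trans (orderOf_dvd_of_pow_eq_one ?_) hCe
    simp
  let κ := monoidHomOfForallMemZpowers hc0 hord
  have hκ : κ c0 = -1 := monoidHomOfForallMemZpowers_apply_gen hc0 hord
  have hκn : ∀ c, ‖(κ c : ℂ)‖ = 1 := by
    intro c
    obtain ⟨i, rfl⟩ := hc0 c
    simp only [map_zpow, hκ]
    simp
  refine dihedral h2 ?_ c0 hc0 κ hκ (pull ρ (P : Subgroup G).subtype) v ?_ hv ?_ ?_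
  · intro x hx
    apply hφi
    rw [map_mul, (hoff _ (hφN x) hx).1, map_one]
  · intro x hx
    rw [← (hoff _ (hφN x) hx).2, hφt]; rfl
  · exact Nat.even_iff.2 (by omega)
  · intro h0
    have e1 : ∑ c : C, (if c = 1 then 0 else ‖tr (ρ (c : P))‖) ≤
        ∑ x : T, (if (x : G) = 1 then 0 else ‖tr (ρ x)‖) := by
      have := Finset.sum_image (s := (Finset.univ : Finset C)) (g := j)
        (f := fun x : T => if (x : G) = 1 then 0 else ‖tr (ρ x)‖) (hji.injOn)
      refine le_trans (le_of_eq ?_) (Finset.sum_le_sum_of_subset_of_nonneg (Finset.subset_univ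
        (Finset.univ.image j)) fun x _ _ => ?_)
      · rw [this]
        refine Finset.sum_congr rfl fun c _ => ?_
        have h5 : ((j c : T) : G) = φ c := rfl
        rw [h5, hφt]
        have h6 : φ c = 1 ↔ c = 1 := by
          rw [← map_one φ, hφi.eq_iff]; simp
        simp only [h6]
      · split_ifs <;> positivity
    rw [← Finset.add_sum_erase _ _ (Finset.mem_univ (1 : C))] at h0
    have h7 : (Module.finrank ℂ V : ℂ) = - ∑ c ∈ Finset.univ.erase (1 : C), tr (pull ρ (P : Subgroup G).subtype c) * (κ c : ℂ) := by
      rw [map_one κ] at h0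
      simp only [Subgroup.coe_one, map_one (pull ρ (P : Subgroup G).subtype)] at h0
      rw [show tr (1 : Module.End ℂ V) = Module.finrank ℂ V by simp] at h0
      simp only [Units.val_one, mul_one] at h0
      linear_combination h0
    have h8 : (Module.finrank ℂ V : ℝ) ≤ ∑ c ∈ Finset.univ.erase (1 : C), ‖tr (ρ (c : P))‖ := by
      have := congrArg norm h7
      rw [norm_neg, Complex.norm_natCast] at this
      rw [this]
      refine (norm_sum_le _ _).trans (Finset.sum_le_sum fun c _ => ?_)
      rw [norm_mul, hκn, mul_one]; rfl
    have h9 : ∑ c : C, (if c = 1 then 0 else ‖tr (ρ (c : P))‖) = ∑ c ∈ Finset.univ.erase (1 : C), ‖tr (ρ (c : P))‖ := by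
      rw [← Finset.add_sum_erase _ _ (Finset.mem_univ (1 : C)), if_pos rfl, zero_add]
      refine Finset.sum_congr rfl fun c hc => ?_
      rw [if_neg (Finset.ne_of_mem_erase hc)]
    rw [h9] at e1
    linarith
end
end SFP

namespace SFP
noncomputable section
set_option linter.unusedSectionVars false
variable {V : Type} [AddCommGroup V] [Module ℂ V] [FiniteDimensional ℂ V]
variable {F : Type} [Field F] [Fintype F]

abbrev PG (F : Type) [Field F] [Fintype F] := SL2 F ⧸ Subgroup.center (SL2 F)
abbrev pr (F : Type) [Field F] [Fintype F] : SL2 F →* PG F := QuotientGroup.mk' _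

lemma pr_surj : Function.Surjective (pr F) := QuotientGroup.mk'_surjective _
lemma pr_ker : (pr F).ker = Subgroup.center (SL2 F) := QuotientGroup.ker_mk' _

lemma cen_iff {g : SL2 F} : g ∈ Subgroup.center (SL2 F) ↔ ∃ a : Fˣ, a ^ 2 = 1 ∧ g = t a := by
  constructor
  · intro h
    rw [Subgroup.mem_center_iff] at h
    have h1 := h (u 1)
    have h2 := h (mk 0 1 (-1) 0 (by ring))
    have c0 : C' g = 0 := by
      have := congrArg D' h1
      simpa [u] using this
    have ad : A' g = D' g := by
      have := congrArg B' h1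
      simp [u] at this
      linear_combination -this
    have b0 : B' g = 0 := by
      have := congrArg A' h2
      simpa [c0, eq_comm] using this
    have hd := dt g
    rw [c0, ← ad] at hd
    have ha : A' g ^ 2 = 1 := by linear_combination hd
    refine ⟨Units.mk0 (A' g) (fun h0 => by rw [h0] at ha; norm_num at ha), ?_, ?_⟩
    · ext; simpa using ha
    · apply ext4 <;> simp [t, b0, c0, ← ad]
      exact eq_inv_of_mul_eq_one_left (by linear_combination ha)
  · rintro ⟨a, ha, rfl⟩
    rw [Subgroup.mem_center_iff]
    intro g
    have := inv_of_sq ha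
    apply ext4 <;> simp [t, this, mul_comm]

lemma card_cen : Nat.card (Subgroup.center (SL2 F)) = ep F := by
  rw [← card_sq, ← Fintype.card_subtype, ← Nat.card_eq_fintype_card]
  symm
  refine Nat.card_eq_of_bijective (fun a : {a : Fˣ // a ^ 2 = 1} =>
    (⟨t a, cen_iff.2 ⟨a, a.2, rfl⟩⟩ : Subgroup.center (SL2 F))) ⟨?_, ?_⟩
  · intro a b h
    exact Subtype.ext (t_inj (congrArg Subtype.val h))
  · rintro ⟨g, hg⟩
    obtain ⟨a, ha, rfl⟩ := cen_iff.1 hg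
    exact ⟨⟨a, ha⟩, rfl⟩

lemma ep_pos : 0 < ep F := by unfold ep; split_ifs <;> norm_num

lemma card_PG : ep F * Nat.card (PG F) = Fintype.card F * (Fintype.card F - 1) * (Fintype.card F + 1) := by
  rw [← card_SL2, ← card_cen, mul_comm, ← Nat.card_eq_fintype_card]
  exact (Subgroup.card_eq_card_quotient_mul_card_subgroup _).symm

lemma normOne_pull {ρ : Representation ℂ (PG F) V} (h : NormOne ρ) : NormOne (pull ρ (pr F)) := by
  unfold NormOne at *
  have := sum_fiber (pr F) pr_surj (fun x => tr (ρ x) * tr (ρ x⁻¹))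
  simp only [pull_apply, map_inv]
  rw [this, h, pr_ker, card_cen, nsmul_eq_mul, card_SL2, ← card_PG]
  push_cast
  rw [Nat.card_eq_fintype_card]

lemma hZ_pull (ρ : Representation ℂ (PG F) V) (a : Fˣ) (ha : a ^ 2 = 1) : pull ρ (pr F) (t a) = 1 := by
  have : pr F (t a) = 1 := by
    rw [← MonoidHom.mem_ker, pr_ker]; exact cen_iff.2 ⟨a, ha, rfl⟩
  rw [pull_apply, this, map_one ρ]

lemma pr_eq_one {g : SL2 F} : pr F g = 1 ↔ g ∈ Subgroup.center (SL2 F) := by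
  rw [← MonoidHom.mem_ker, pr_ker]

lemma mem_map_iff {H : Subgroup (SL2 F)} (hH : Subgroup.center (SL2 F) ≤ H) {g : SL2 F} :
    pr F g ∈ H.map (pr F) ↔ g ∈ H := by
  rw [← Subgroup.mem_comap, Subgroup.comap_map_eq_self (by rw [pr_ker]; exact hH)]

lemma sum_map {H : Subgroup (SL2 F)} (hH : Subgroup.center (SL2 F) ≤ H) {M : Type} [AddCommMonoid M]
    (g : PG F → M) : ∑ h : H, g (pr F h) = ep F • ∑ x : H.map (pr F), g x := by
  have := sum_fiber ((pr F).subgroupMap H) ((pr F).subgroupMap_surjective H) (fun x => g x)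
  have e : Nat.card ((pr F).subgroupMap H).ker = ep F := by
    rw [← card_cen, ← Nat.card_congr (Subgroup.subgroupOfEquivOfLe hH).toEquiv]
    have : ((pr F).subgroupMap H).ker = (Subgroup.center (SL2 F)).subgroupOf H := by
      ext x
      rw [MonoidHom.mem_ker, Subgroup.mem_subgroupOf, ← pr_eq_one]
      constructor
      · intro h; exact congrArg Subtype.val h
      · intro h; exact Subtype.ext h
    rw [this]
  rw [e] at this
  exact this

lemma card_map {H : Subgroup (SL2 F)} (hH : Subgroup.center (SL2 F) ≤ H) :
    ep F * Nat.card (H.map (pr F)) = Nat.card H := by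
  have := sum_map hH (fun _ => (1 : ℕ))
  simp only [Finset.sum_const, Finset.card_univ, smul_eq_mul, mul_one] at this
  rw [Nat.card_eq_fintype_card, Nat.card_eq_fintype_card, this]

lemma sylow_SL {p : ℕ} [Fact p.Prime] (P : Sylow p (PG F)) (H : Subgroup (SL2 F)) (hH : ¬ p ∣ H.index) :
    ∃ g : PG F, ∀ x ∈ P, ∃ h ∈ H, pr F h = g * x * g⁻¹ := by
  obtain ⟨g, hg⟩ := sylow_conj P (H.map (pr F)) (fun h => hH (h.trans (Subgroup.index_map_dvd _ pr_surj)))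
  exact ⟨g, fun x hx => hg x hx⟩

lemma vanish_SL {p : ℕ} [Fact p.Prime] (P : Sylow p (PG F)) (ρ : Representation ℂ (PG F) V)
    (H : Subgroup (SL2 F)) (hH : ¬ p ∣ H.index)
    (hv : ∀ h ∈ H, h ∉ Subgroup.center (SL2 F) → tr (pull ρ (pr F) h) = 0) :
    ∀ x ∈ P, x ≠ 1 → tr (ρ x) = 0 := by
  obtain ⟨g, hg⟩ := sylow_SL P H hH
  intro x hx hx1
  obtain ⟨h, hh, he⟩ := hg x hx
  have := hv h hh (fun hc => by
    rw [← pr_eq_one, he] at hc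
    apply hx1
    simpa using hc)
  rw [pull_apply, he, tr_conj] at this
  exact this

def Usub (F : Type) [Field F] : Subgroup (SL2 F) where
  carrier := {g | A' g = 1 ∧ C' g = 0 ∧ D' g = 1}
  mul_mem' := by
    rintro a b ⟨h1, h2, h3⟩ ⟨h4, h5, h6⟩
    refine ⟨?_, ?_, ?_⟩ <;> simp [*]
  one_mem' := by refine ⟨?_, ?_, ?_⟩ <;> simp
  inv_mem' := by
    rintro a ⟨h1, h2, h3⟩
    refine ⟨?_, ?_, ?_⟩ <;> simp [*]

def Bsub (F : Type) [Field F] : Subgroup (SL2 F) where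
  carrier := {g | C' g = 0}
  mul_mem' := by
    intro a b (h1 : _ = _) (h2 : _ = _)
    show _ = _
    simp [*]
  one_mem' := by show _ = _; simp
  inv_mem' := by
    intro a (h1 : _ = _)
    show _ = _
    simp [*]

def Tsub (F : Type) [Field F] : Subgroup (SL2 F) where
  carrier := {g | B' g = 0 ∧ C' g = 0}
  mul_mem' := by
    rintro a b ⟨h1, h2⟩ ⟨h4, h5⟩
    refine ⟨?_, ?_⟩ <;> simp [*]
  one_mem' := by refine ⟨?_, ?_⟩ <;> simp
  inv_mem' := by
    rintro a ⟨h1, h2⟩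
    refine ⟨?_, ?_⟩ <;> simp [*]

def Nsub (F : Type) [Field F] : Subgroup (SL2 F) where
  carrier := {g | (B' g = 0 ∧ C' g = 0) ∨ (A' g = 0 ∧ D' g = 0)}
  mul_mem' := by
    rintro a b (⟨h1, h2⟩ | ⟨h1, h2⟩) (⟨h4, h5⟩ | ⟨h4, h5⟩)
    · left; refine ⟨?_, ?_⟩ <;> simp [*]
    · right; refine ⟨?_, ?_⟩ <;> simp [*]
    · right; refine ⟨?_, ?_⟩ <;> simp [*]
    · left; refine ⟨?_, ?_⟩ <;> simp [*]
  one_mem' := by left; refine ⟨?_, ?_⟩ <;> simp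
  inv_mem' := by
    rintro a (⟨h1, h2⟩ | ⟨h1, h2⟩)
    · left; refine ⟨?_, ?_⟩ <;> simp [*]
    · right; refine ⟨?_, ?_⟩ <;> simp [*]

lemma mem_Tsub {g : SL2 F} : g ∈ Tsub F ↔ ∃ a, g = t a := by
  constructor
  · rintro ⟨h1, h2⟩
    have := dt g
    rw [h1, h2] at this
    have h : A' g * D' g = 1 := by linear_combination this
    refine ⟨Units.mkOfMulEqOne _ _ h, ?_⟩
    apply ext4 <;> simp [t, h1, h2]
    exact eq_inv_of_mul_eq_one_left (by linear_combination h)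
  · rintro ⟨a, rfl⟩
    exact ⟨by simp [t], by simp [t]⟩

lemma card_U : Nat.card (Usub F) = Fintype.card F := by
  rw [← Nat.card_eq_fintype_card]
  symm
  refine Nat.card_eq_of_bijective (fun x : F => (⟨u x, by simp [u], by simp [u], by simp [u]⟩ : Usub F)) ⟨?_, ?_⟩
  · intro a b h
    have := congrArg (fun g => B' g.1) h
    simpa [u] using this
  · rintro ⟨g, h1, h2, h3⟩
    exact ⟨B' g, Subtype.ext (ext4 (by simp [u, h1]) (by simp [u]) (by simp [u, h2]) (by simp [u, h3]))⟩

lemma card_units' : Nat.card Fˣ = Fintype.card F - 1 := by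
  rw [Nat.card_eq_fintype_card, Fintype.card_units]

lemma card_T : Nat.card (Tsub F) = Fintype.card F - 1 := by
  rw [← card_units']
  symm
  refine Nat.card_eq_of_bijective (fun x : Fˣ => (⟨t x, mem_Tsub.2 ⟨x, rfl⟩⟩ : Tsub F)) ⟨?_, ?_⟩
  · intro a b h
    exact t_inj (congrArg Subtype.val h)
  · rintro ⟨g, h⟩
    obtain ⟨a, rfl⟩ := mem_Tsub.1 h
    exact ⟨a, rfl⟩

lemma card_B : Nat.card (Bsub F) = Fintype.card F * (Fintype.card F - 1) := by
  rw [← card_units', ← Nat.card_eq_fintype_card, ← Nat.card_prod]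
  symm
  have key : ∀ (x : F) (a : Fˣ), u x * t a ∈ Bsub F := fun x a => by
    show C' _ = 0
    simp [u, t]
  refine Nat.card_eq_of_bijective (fun x : F × Fˣ => (⟨u x.1 * t x.2, key _ _⟩ : Bsub F)) ⟨?_, ?_⟩
  · rintro ⟨x, a⟩ ⟨y, b⟩ h
    have h1 := congrArg (fun g => A' g.1) h
    have h2 := congrArg (fun g => B' g.1) h
    simp [u, t] at h1 h2
    have := Units.ext h1
    subst this
    simpa using h2
  · rintro ⟨g, h⟩
    have h : C' g = 0 := h
    have := dt g
    rw [h] at this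
    have h3 : A' g * D' g = 1 := by linear_combination this
    refine ⟨(B' g * A' g, Units.mkOfMulEqOne _ _ h3), Subtype.ext ?_⟩
    have hA := left_ne_zero_of_mul_eq_one h3
    have hD : D' g = (A' g)⁻¹ := eq_inv_of_mul_eq_one_left (by linear_combination h3)
    apply ext4 <;> simp [u, t, h, hA, hD]
end
end SFP

namespace SFP
noncomputable section
set_option linter.unusedSectionVars false
variable {V : Type} [AddCommGroup V] [Module ℂ V] [FiniteDimensional ℂ V]
variable {F : Type} [Field F] [Fintype F]

lemma eig_conj {h : SL2 F} (hh : ¬ noEig h) : ∃ y, y * h * y⁻¹ ∈ Bsub F := by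
  unfold noEig at hh
  push Not at hh
  obtain ⟨l, hl⟩ := hh
  by_cases hC : C' h = 0
  · exact ⟨1, by rw [one_mul, inv_one, mul_one]; exact hC⟩
  · refine ⟨(mk (l - D' h) (-(C' h)⁻¹) (C' h) 0 (by field_simp; ring))⁻¹, ?_⟩
    show C' _ = 0
    simp
    have := dt h
    unfold tr2 at hl
    linear_combination (C' h) * hl + C' h * this

lemma noEig_vanish {p : ℕ} [Fact p.Prime] (P : Sylow p (PG F)) (ρ : Representation ℂ (PG F) V)
    (hv : ∀ g, noEig g → tr (pull ρ (pr F) g) = 0)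
    (hp : ¬ p ∣ Nat.card ((Bsub F).map (pr F))) : ∀ x ∈ P, x ≠ 1 → tr (ρ x) = 0 := by
  intro x hx hx1
  obtain ⟨h, rfl⟩ := pr_surj x
  by_cases hh : noEig h
  · exact hv h hh
  exfalso
  obtain ⟨y, hy⟩ := eig_conj hh
  apply hp
  have h1 : pr F (y * h * y⁻¹) ∈ (Bsub F).map (pr F) := Subgroup.mem_map_of_mem _ hy
  have h2 : orderOf (pr F (y * h * y⁻¹)) ∣ Nat.card ((Bsub F).map (pr F)) :=
    Subgroup.orderOf_dvd_natCard _ h1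
  refine dvd_trans ?_ h2
  rw [map_mul, map_mul, map_inv]
  have h3 : orderOf (pr F y * pr F h * (pr F y)⁻¹) = orderOf (pr F h) := by
    have := orderOf_injective (MulAut.conj (pr F y)).toMonoidHom (MulAut.conj (pr F y)).injective (pr F h)
    simpa using this
  rw [h3]
  obtain ⟨k, hk⟩ := P.isPGroup'.exists_orderOf_eq_pow ⟨_, hx⟩ 
  rw [Subgroup.orderOf_mk] at hk
  rw [hk]
  apply dvd_pow_self
  rintro rfl
  rw [pow_zero, orderOf_eq_one_iff] at hk
  exact hx1 hk

def ww (F : Type) [Field F] : SL2 F := mk 0 (-1) 1 0 (by ring)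

lemma tr0_conj (hodd : Fintype.card F % 2 = 1) {g : SL2 F} (hg : tr2 g = 0) :
    ∃ x, x * g * x⁻¹ = ww F := by
  unfold tr2 at hg
  have hD : D' g = - A' g := by linear_combination hg
  have hd := dt g
  rw [hD] at hd
  have key : ∃ x y : F, C' g * x ^ 2 - 2 * A' g * x * y - B' g * y ^ 2 = 1 := by
    by_cases hC : C' g = 0
    · rw [hC] at hd
      have hA : A' g ≠ 0 := by intro h; rw [h] at hd; norm_num at hd
      have h2 : (2 : F) ≠ 0 := by
        apply Ring.two_ne_zero
        intro h
        rw [FiniteField.even_card_iff_char_two.1 h] at hodd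
        omega
      refine ⟨-(1 + B' g) / (2 * A' g), 1, ?_⟩
      rw [hC]; field_simp; ring
    · obtain ⟨X, y, h⟩ := FiniteField.exists_root_sum_quadratic (R := F)
        (f := Polynomial.X ^ 2) (g := Polynomial.X ^ 2 - Polynomial.C (C' g))
        (by simp) (Polynomial.degree_X_pow_sub_C (by norm_num) _) hodd
      simp at h
      refine ⟨(X + A' g * y) / C' g, y, ?_⟩
      field_simp
      linear_combination h + y ^ 2 * hd
  obtain ⟨x, y, h⟩ := key
  refine ⟨(mk x (A' g * x + B' g * y) y (C' g * x - A' g * y) (by linear_combination h))⁻¹, ?_⟩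
  rw [inv_inv, mul_assoc, inv_mul_eq_iff_eq_mul]
  apply ext4 <;> simp [ww, hD]
  · linear_combination (-x) * hd
  · ring
  · linear_combination (-y) * hd

lemma tr0_tr (hodd : Fintype.card F % 2 = 1) (ρ : Representation ℂ (SL2 F) V) {g : SL2 F} (hg : tr2 g = 0) :
    tr (ρ g) = tr (ρ (ww F)) := by
  obtain ⟨x, hx⟩ := tr0_conj hodd hg
  rw [← hx, tr_conj]

lemma tr0_sq {g : SL2 F} (hg : tr2 g = 0) : pr F g * pr F g = 1 := by
  rw [← map_mul, pr_eq_one, cen_iff]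
  refine ⟨-1, by ext; simp, ?_⟩
  unfold tr2 at hg
  have hD : D' g = - A' g := by linear_combination hg
  have hd := dt g
  rw [hD] at hd
  apply ext4 <;> simp [t, hD]
  · linear_combination -hd
  · ring
  · ring
  · linear_combination -hd

lemma card_double {G : Type} [Group G] [Finite G] {T N : Subgroup G} (hle : T ≤ N) {s : G} (hs : s ∈ N) (hs' : s ∉ T)
    (hTN : ∀ x ∈ N, ∀ y ∈ N, x ∉ T → y ∉ T → x * y ∈ T) : Nat.card N = 2 * Nat.card T := by
  have h : (T.subgroupOf N).index = 2 := by
    rw [Subgroup.index_eq_two_iff]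
    refine ⟨⟨s, hs⟩, fun b => ?_⟩
    rw [Subgroup.mem_subgroupOf, Subgroup.mem_subgroupOf]
    by_cases hb : (b : G) ∈ T
    · right
      refine ⟨hb, fun h => hs' ?_⟩
      exact (Subgroup.mul_mem_cancel_left T hb).1 h
    · left
      exact ⟨hTN _ b.2 _ hs hb hs', hb⟩
  rw [← Subgroup.index_mul_card (T.subgroupOf N), h, Nat.card_congr (Subgroup.subgroupOfEquivOfLe hle).toEquiv]

lemma idx (H : Subgroup (SL2 F)) : H.index * Nat.card H = Fintype.card F * (Fintype.card F - 1) * (Fintype.card F + 1) := by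
  rw [Subgroup.index_mul_card, Nat.card_eq_fintype_card, card_SL2]

lemma card_N : Nat.card (Nsub F) = 2 * (Fintype.card F - 1) := by
  rw [← card_T]
  refine card_double (s := ww F) (fun x hx => Or.inl hx) (Or.inr (by simp [ww])) (fun h => ?_) ?_
  · have := h.2; simp [ww] at this
  · rintro x (hx | hx) y (hy | hy) h1 h2
    · exact absurd hx h1
    · exact absurd hx h1
    · exact absurd hy h2
    · constructor <;> simp [hx, hy]

lemma cen_T : Subgroup.center (SL2 F) ≤ Tsub F := by
  intro g hg
  obtain ⟨a, _, rfl⟩ := cen_iff.1 hg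
  exact mem_Tsub.2 ⟨a, rfl⟩
lemma cen_N : Subgroup.center (SL2 F) ≤ Nsub F := cen_T.trans (fun x hx => Or.inl hx)
lemma cen_B : Subgroup.center (SL2 F) ≤ Bsub F := cen_T.trans (fun x hx => hx.2)

lemma mem_N_not_T {g : SL2 F} (h : g ∈ Nsub F) (h' : g ∉ Tsub F) : tr2 g = 0 := by
  rcases h with h | h
  · exact absurd h h'
  · simp [tr2, h]

end
end SFP

namespace SFP
noncomputable section
set_option linter.unusedSectionVars false
variable {V : Type} [AddCommGroup V] [Module ℂ V] [FiniteDimensional ℂ V]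
variable {F : Type} [Field F] [Fintype F]

lemma pars {B : Type} [CommGroup B] [Fintype B] (ρ : Representation ℂ B V)
    (n : ℕ) (hn : Fintype.card B = n) (hd : Module.finrank ℂ V + 2 = 2 * n)
    (hs : ∑ x : B, (if x = 1 then 0 else ‖tr (ρ x)‖ ^ 2) ≤ 2 * (n : ℝ) - 4) (z : B) (hz : z ≠ 1) :
    ‖tr (ρ z)‖ ≤ 2 := by
  obtain ⟨m, -, hm⟩ := exists_mult (toAdd ρ) 1 (one_mul 1) (fun x => by rw [one_mul, mul_one])
  have hn0 : 0 < (n : ℝ) := by rw [← hn]; exact_mod_cast Fintype.card_pos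
  have hm' : ∀ x : B, tr (ρ x) = ∑ ψ, (m ψ : ℂ) * ψ (Additive.ofMul x) := fun x => by
    rw [← hm, mul_one]; rfl
  have hd' : (Module.finrank ℂ V : ℝ) = 2 * n - 2 := by
    have : (Module.finrank ℂ V : ℝ) + 2 = 2 * n := by exact_mod_cast hd
    linarith
  have ht1 : tr (ρ (1 : B)) = Module.finrank ℂ V := by
    rw [map_one ρ]; simp [tr]
  have hsum : ∑ ψ, (m ψ : ℝ) = 2 * n - 2 := by
    have := hm' 1
    rw [ht1] at this
    simp at this
    rw [← hd']
    exact_mod_cast this.symm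
  have hp := parseval m
  have hcA : (Fintype.card (Additive B) : ℝ) = n := by
    rw [← hn]; exact_mod_cast Fintype.card_congr Additive.toMul
  rw [hcA] at hp
  have hall : ∑ x : B, ‖tr (ρ x)‖ ^ 2 ≤ n * (4 * n - 6) := by
    have e : ∑ x : B, ‖tr (ρ x)‖ ^ 2 = ∑ x : B, (if x = 1 then 0 else ‖tr (ρ x)‖ ^ 2)
        + ∑ x : B, (if x = 1 then (2 * (n : ℝ) - 2) ^ 2 else 0) := by
      rw [← Finset.sum_add_distrib]
      refine Finset.sum_congr rfl fun x _ => ?_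
      split_ifs with h
      · rw [h, ht1, ← hd']; simp
      · simp
    rw [e, Finset.sum_ite_eq' Finset.univ (1 : B)]
    simp only [Finset.mem_univ, if_true]
    nlinarith
  have hall2 : ∑ x : Additive B, ‖∑ ψ, (m ψ : ℂ) * ψ x‖ ^ 2 = ∑ x : B, ‖tr (ρ x)‖ ^ 2 := by
    refine Fintype.sum_equiv Additive.toMul _ _ fun x => ?_
    rw [hm']; rfl
  rw [hall2] at hp
  have hsq : ∑ ψ, (m ψ : ℝ) ^ 2 ≤ 4 * n - 6 := by
    rw [hp] at hall
    exact le_of_mul_le_mul_left hall hn0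
  have hcd : (Fintype.card (AddChar (Additive B) ℂ) : ℝ) = n := by
    rw [← hcA]; exact_mod_cast AddChar.card_eq
  have he : ∑ ψ, ((2 : ℝ) - m ψ) ^ 2 ≤ 2 := by
    have : ∑ ψ, ((2 : ℝ) - m ψ) ^ 2 = 4 * Fintype.card (AddChar (Additive B) ℂ) - 4 * ∑ ψ, (m ψ : ℝ) + ∑ ψ, (m ψ : ℝ) ^ 2 := by
      rw [Finset.mul_sum, ← Finset.card_univ, mul_comm, ← nsmul_eq_mul, ← Finset.sum_const, ← Finset.sum_sub_distrib,
        ← Finset.sum_add_distrib]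
      refine Finset.sum_congr rfl fun x _ => by ring
    rw [this, hcd, hsum]
    linarith
  have hz0 : ∑ ψ : AddChar (Additive B) ℂ, ψ (Additive.ofMul z) = 0 :=
    AddChar.sum_apply_eq_zero_iff_ne_zero.2 hz
  have hval : tr (ρ z) = - ∑ ψ : AddChar (Additive B) ℂ, ((2 : ℂ) - m ψ) * ψ (Additive.ofMul z) := by
    rw [hm']
    simp only [sub_mul, Finset.sum_sub_distrib, ← Finset.mul_sum, hz0]
    ring
  rw [hval, norm_neg]
  refine (norm_sum_le _ _).trans (le_trans (Finset.sum_le_sum fun ψ _ => ?_) he)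
  rw [norm_mul, AddChar.norm_apply, mul_one]
  have h1 : (2 : ℂ) - m ψ = ((2 - m ψ : ℤ) : ℂ) := by push_cast; rfl
  have h2 : (2 : ℝ) - m ψ = ((2 - m ψ : ℤ) : ℝ) := by push_cast; rfl
  rw [h1, h2, Complex.norm_intCast, ← sq_abs]
  rw [← Int.cast_abs]
  have : |(2 - m ψ : ℤ)| ≤ |(2 - m ψ : ℤ)| ^ 2 := Int.le_self_sq _
  exact_mod_cast this

lemma pars' {G : Type} [Group G] [Fintype G] (ρ : Representation ℂ G V) (T : Subgroup G) (hT : IsCyclic T)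
    (n : ℕ) (hn : Nat.card T = n) (hd : Module.finrank ℂ V + 2 = 2 * n)
    (hs : ∑ x : T, (if (x : G) = 1 then 0 else ‖tr (ρ x)‖ ^ 2) ≤ 2 * (n : ℝ) - 4) (z : G) (hzT : z ∈ T) (hz : z ≠ 1) :
    ‖tr (ρ z)‖ ≤ 2 := by
  let _ : CommGroup T := IsCyclic.commGroup
  refine pars (pull ρ T.subtype) n (by rw [← hn, Nat.card_eq_fintype_card]) hd ?_ ⟨z, hzT⟩ (fun h => hz (congrArg Subtype.val h))
  refine le_trans (le_of_eq ?_) hs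
  refine Finset.sum_congr rfl fun x _ => ?_
  have : x = 1 ↔ (x : G) = 1 := by simp
  simp only [this]
  rfl

lemma hb_of {G : Type} [Group G] [Fintype G] (ρ : Representation ℂ G V) (T : Subgroup G)
    (n : ℕ) (hn : Nat.card T = n) (hn2 : 2 ≤ n) (hd : Module.finrank ℂ V + 2 = 2 * n)
    (hs : ∑ x : T, (if (x : G) = 1 then 0 else ‖tr (ρ x)‖ ^ 2) ≤ 2 * (n : ℝ) - 4) :
    ∑ x : T, (if (x : G) = 1 then 0 else ‖tr (ρ x)‖) < (Module.finrank ℂ V : ℝ) := by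
  have hd' : (Module.finrank ℂ V : ℝ) = 2 * n - 2 := by
    have : (Module.finrank ℂ V : ℝ) + 2 = 2 * n := by exact_mod_cast hd
    linarith
  have hn2' : (2 : ℝ) ≤ n := by exact_mod_cast hn2
  have h := sq_sum_le_card_mul_sum_sq (s := Finset.univ) (f := fun x : T => (if (x : G) = 1 then 0 else ‖tr (ρ x)‖))
  have e : ∀ x : T, (if (x : G) = 1 then 0 else ‖tr (ρ x)‖) ^ 2 = (if (x : G) = 1 then 0 else ‖tr (ρ x)‖ ^ 2) := by
    intro x; split_ifs <;> simp
  simp only [e] at h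
  rw [Finset.card_univ, ← Nat.card_eq_fintype_card, hn] at h
  rw [hd']
  apply lt_of_pow_lt_pow_left₀ 2 (by linarith)
  refine lt_of_le_of_lt h ?_
  nlinarith [mul_le_mul_of_nonneg_left hs (by linarith : (0:ℝ) ≤ n)]

end
end SFP

namespace SFP
noncomputable section
set_option linter.unusedSectionVars false
variable {V : Type} [AddCommGroup V] [Module ℂ V] [FiniteDimensional ℂ V]
variable {F : Type} [Field F] [Fintype F]

def T0 (F : Type) [Field F] : Subgroup (SL2 F) where
  carrier := {g | A' g = D' g ∧ B' g = - C' g}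
  mul_mem' := by
    rintro a b ⟨h1, h2⟩ ⟨h4, h5⟩
    refine ⟨?_, ?_⟩ <;> simp [*] <;> ring
  one_mem' := by refine ⟨?_, ?_⟩ <;> simp
  inv_mem' := by
    rintro a ⟨h1, h2⟩
    refine ⟨?_, ?_⟩ <;> simp [*]

def N0 (F : Type) [Field F] : Subgroup (SL2 F) where
  carrier := {g | (A' g = D' g ∧ B' g = - C' g) ∨ (A' g = - D' g ∧ B' g = C' g)}
  mul_mem' := by
    rintro a b (⟨h1, h2⟩ | ⟨h1, h2⟩) (⟨h4, h5⟩ | ⟨h4, h5⟩)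
    · left; refine ⟨?_, ?_⟩ <;> simp [*] <;> ring
    · right; refine ⟨?_, ?_⟩ <;> simp [*] <;> ring
    · right; refine ⟨?_, ?_⟩ <;> simp [*] <;> ring
    · left; refine ⟨?_, ?_⟩ <;> simp [*] <;> ring
  one_mem' := by left; refine ⟨?_, ?_⟩ <;> simp
  inv_mem' := by
    rintro a (⟨h1, h2⟩ | ⟨h1, h2⟩)
    · left; refine ⟨?_, ?_⟩ <;> simp [*]
    · right; refine ⟨?_, ?_⟩ <;> simp [*]

lemma cen_T0 : Subgroup.center (SL2 F) ≤ T0 F := by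
  intro g hg
  obtain ⟨a, ha, rfl⟩ := cen_iff.1 hg
  refine ⟨?_, ?_⟩ <;> simp [t, inv_of_sq ha]
lemma T0_le : T0 F ≤ N0 F := fun _ hx => Or.inl hx
lemma cen_N0 : Subgroup.center (SL2 F) ≤ N0 F := cen_T0.trans T0_le

lemma T0_sq {g : SL2 F} (h : g ∈ T0 F) : A' g ^ 2 + C' g ^ 2 = 1 := by
  obtain ⟨h1, h2⟩ := h
  have := dt g
  rw [h2, ← h1] at this
  linear_combination this

lemma T0_cen {g : SL2 F} (h : g ∈ T0 F) (hC : C' g = 0) : g ∈ Subgroup.center (SL2 F) := by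
  have hs := T0_sq h
  obtain ⟨h1, h2⟩ := h
  rw [hC] at hs
  have hs : A' g * A' g = 1 := by linear_combination hs
  rw [cen_iff]
  refine ⟨Units.mkOfMulEqOne _ _ hs, ?_, ?_⟩
  · ext; simp [sq, hs]
  · apply ext4 <;> simp [t, h2, hC, ← h1]
    exact eq_inv_of_mul_eq_one_left hs

lemma card_T0 (hns : ∀ x : F, x ^ 2 ≠ -1) (h2 : (2 : F) ≠ 0) : Nat.card (T0 F) = Fintype.card F + 1 := by
  have hm : ∀ m : F, 1 + m ^ 2 ≠ 0 := fun m h => hns m (by linear_combination h)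
  rw [← Fintype.card_option, ← Nat.card_eq_fintype_card]
  symm
  let r : Option F → SL2 F := fun o => match o with
    | none => mk (-1) 0 0 (-1) (by ring)
    | some m => mk ((1 - m ^ 2) / (1 + m ^ 2)) (-(2 * m / (1 + m ^ 2))) (2 * m / (1 + m ^ 2)) ((1 - m ^ 2) / (1 + m ^ 2))
      (by have := hm m; field_simp; ring)
  have hr : ∀ o, r o ∈ T0 F := by
    rintro (_ | m)
    · exact ⟨by simp [r], by simp [r]⟩
    · exact ⟨by simp [r], by simp [r]⟩
  refine Nat.card_eq_of_bijective (fun o => (⟨r o, hr o⟩ : T0 F)) ⟨?_, ?_⟩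
  · have h3 : ∀ m, 1 + A' (r (some m)) = 2 / (1 + m ^ 2) := fun m => by
      simp [r]; have := hm m; field_simp; ring
    have h4 : ∀ m, C' (r (some m)) = 2 * m / (1 + m ^ 2) := fun m => by simp [r]
    have h5 : 1 + A' (r none) = 0 := by simp [r]
    have h6 : ∀ m : F, 2 / (1 + m ^ 2) ≠ 0 := fun m => div_ne_zero h2 (hm m)
    intro o o' h
    have h : r o = r o' := congrArg Subtype.val h
    rcases o with _ | m <;> rcases o' with _ | m'
    · rfl
    · exact absurd (by rw [← h3, ← h, h5]) (h6 m')
    · exact absurd (by rw [← h3, h, h5]) (h6 m)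
    · have e1 : 2 / (1 + m ^ 2) = 2 / (1 + m' ^ 2) := by rw [← h3, ← h3, h]
      have e2 : 2 * m / (1 + m ^ 2) = 2 * m' / (1 + m' ^ 2) := by rw [← h4, ← h4, h]
      have : 2 / (1 + m ^ 2) * m = 2 / (1 + m ^ 2) * m' := by
        rw [mul_comm 2 m, mul_comm 2 m', mul_div_assoc, mul_div_assoc, ← e1] at e2
        linear_combination e2
      rw [mul_left_cancel₀ (h6 m) this]
  · rintro ⟨g, hg⟩
    have hs := T0_sq hg
    obtain ⟨h3, h4⟩ := hg
    by_cases hA : A' g = -1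
    · have hC : C' g = 0 := by
        rw [hA] at hs
        have : C' g ^ 2 = 0 := by linear_combination hs
        exact pow_eq_zero_iff (two_ne_zero) |>.1 this
      exact ⟨none, Subtype.ext (ext4 (by simp [r, hA]) (by simp [r, h4, hC]) (by simp [r, hC]) (by simp [r, ← h3, hA]))⟩
    · have hA' : 1 + A' g ≠ 0 := fun h => hA (by linear_combination h)
      have k1 : 1 + (C' g / (1 + A' g)) ^ 2 = 2 / (1 + A' g) := by
        field_simp; linear_combination hs
      have k2 : (1 - (C' g / (1 + A' g)) ^ 2) / (1 + (C' g / (1 + A' g)) ^ 2) = A' g := by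
        rw [k1]; field_simp; linear_combination -hs
      have k3 : 2 * (C' g / (1 + A' g)) / (1 + (C' g / (1 + A' g)) ^ 2) = C' g := by
        rw [k1]; field_simp
      refine ⟨some (C' g / (1 + A' g)), Subtype.ext (ext4 ?_ ?_ ?_ ?_)⟩
      · simp only [r, A_mk]; exact k2
      · simp only [r, B_mk]; rw [k3, h4]
      · simp only [r, C_mk]; exact k3
      · simp only [r, D_mk]; rw [k2, h3]

lemma cyc_T0 (h2 : (2 : F) ≠ 0) : IsCyclic (T0 F) := by
  obtain ⟨i, hi⟩ := IsAlgClosed.exists_pow_nat_eq (k := AlgebraicClosure F) (-1) (n := 2) (by norm_num)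
  let c := algebraMap F (AlgebraicClosure F)
  have hi0 : i ≠ 0 := by rintro rfl; norm_num at hi
  have h2' : (2 : AlgebraicClosure F) ≠ 0 := by
    have : c 2 ≠ 0 := (map_ne_zero c).2 h2
    rwa [map_ofNat] at this
  let f : T0 F →* AlgebraicClosure F :=
    { toFun := fun g => c (A' g.1) + i * c (C' g.1)
      map_one' := by simp
      map_mul' := by
        rintro ⟨g, hg, hg'⟩ ⟨k, hk, hk'⟩
        simp [hg', hk', ← hg, ← hk]
        linear_combination (-c (C' g) * c (C' k)) * hi }
  have key : ∀ g : T0 F, (c (A' g.1) + i * c (C' g.1)) * (c (A' g.1) - i * c (C' g.1)) = 1 := by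
    rintro ⟨g, hg⟩
    have := congrArg c (T0_sq hg)
    simp at this
    linear_combination this - c (C' g) ^ 2 * hi
  refine isCyclic_of_subgroup_isDomain f ?_
  intro g k h
  have h : c (A' g.1) + i * c (C' g.1) = c (A' k.1) + i * c (C' k.1) := h
  have h0 := left_ne_zero_of_mul_eq_one (key k)
  have h' : c (A' g.1) - i * c (C' g.1) = c (A' k.1) - i * c (C' k.1) := by
    apply mul_left_cancel₀ h0
    rw [key k, ← h, key g]
  have e1 : A' g.1 = A' k.1 := c.injective (mul_left_cancel₀ h2' (by linear_combination h + h'))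
  have e2 : C' g.1 = C' k.1 := c.injective (mul_left_cancel₀ hi0 (mul_left_cancel₀ h2' (by linear_combination h - h')))
  refine Subtype.ext (ext4 e1 ?_ e2 ?_)
  · rw [g.2.2, k.2.2, e2]
  · rw [← g.2.1, ← k.2.1, e1]

lemma T0_N0 : ∀ x ∈ N0 F, ∀ y ∈ N0 F, x ∉ T0 F → y ∉ T0 F → x * y ∈ T0 F := by
  rintro x (hx | hx) y (hy | hy) h1 h2
  · exact absurd hx h1
  · exact absurd hx h1
  · exact absurd hy h2
  · constructor <;> simp [hx, hy] <;> ring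

lemma card_N0 (hns : ∀ x : F, x ^ 2 ≠ -1) (h2 : (2 : F) ≠ 0) (hodd : Fintype.card F % 2 = 1) : Nat.card (N0 F) = 2 * (Fintype.card F + 1) := by
  rw [← card_T0 hns h2]
  obtain ⟨a, b, h⟩ := FiniteField.exists_root_sum_quadratic (R := F)
        (f := Polynomial.X ^ 2) (g := Polynomial.X ^ 2 - Polynomial.C (-1 : F))
        (by simp) (Polynomial.degree_X_pow_sub_C (by norm_num) _) hodd
  simp at h
  refine card_double (s := mk a b b (-a) (by linear_combination -h)) T0_le (Or.inr (by simp)) (fun h' => ?_) T0_N0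
  obtain ⟨h3, h4⟩ := h'
  simp at h3 h4
  have ha : a = 0 := mul_left_cancel₀ h2 (by linear_combination h3)
  have hb : b = 0 := mul_left_cancel₀ h2 (by linear_combination h4)
  rw [ha, hb] at h
  norm_num at h

lemma mem_N0_not_T0 {g : SL2 F} (h : g ∈ N0 F) (h' : g ∉ T0 F) : tr2 g = 0 := by
  rcases h with h | h
  · exact absurd h h'
  · simp [tr2, h]

lemma ww_T0 : ww F ∈ T0 F := ⟨by simp [ww], by simp [ww]⟩
lemma ww_cen : ww F ∉ Subgroup.center (SL2 F) := by
  intro h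
  obtain ⟨a, _, h⟩ := cen_iff.1 h
  have := congrArg C' h
  simp [ww, t] at this

def X0 (F : Type) [Field F] [Fintype F] : Finset (SL2 F) :=
  Finset.univ.filter (fun g => g ∈ T0 F ∧ g ∉ Subgroup.center (SL2 F))
lemma mem_X0 {g : SL2 F} : g ∈ X0 F ↔ g ∈ T0 F ∧ g ∉ Subgroup.center (SL2 F) := by simp [X0]
def N0f (F : Type) [Field F] [Fintype F] : Finset (SL2 F) :=
  Finset.univ.filter (fun g => g ∈ N0 F)
lemma mem_N0f {g : SL2 F} : g ∈ N0f F ↔ g ∈ N0 F := by simp [N0f]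

lemma sum_X0 (hns : ∀ x : F, x ^ 2 ≠ -1) (h2 : (2 : F) ≠ 0) (hodd : Fintype.card F % 2 = 1) (hq : 3 ≤ Fintype.card F) (ρ : Representation ℂ (SL2 F) V)
    (hs : ∑ g ∈ noEigSet F, nz ρ g ≤ Fintype.card F * ((Fintype.card F : ℝ) - 1) * (Fintype.card F - 3)) :
    ∑ g ∈ X0 F, nz ρ g ≤ 2 * ((Fintype.card F : ℝ) - 3) := by
  have hti := ti (nz ρ) (nz_nonneg ρ) (nz_conj ρ) (X0 F) (N0f F) (by
    intro h hh x hx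
    rw [mem_X0] at hh hx
    rw [mem_N0f]
    obtain ⟨hh, hc⟩ := hh
    obtain ⟨hx, -⟩ := hx
    have hC : C' h ≠ 0 := fun h0 => hc (T0_cen hh h0)
    set k := x * h * x⁻¹ with hk
    have e : x * h = k * x := by rw [hk]; group
    have htr : tr2 k = tr2 h := tr2_conj x h
    have sh := T0_sq hh
    have sk := T0_sq hx
    obtain ⟨a1, a2⟩ := hh
    obtain ⟨b1, b2⟩ := hx
    unfold tr2 at htr
    rw [← a1, ← b1] at htr
    have hA : A' k = A' h := mul_left_cancel₀ h2 (by linear_combination htr)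
    have e1 := congrArg A' e
    have e2 := congrArg B' e
    simp only [A_mul, B_mul, a2, b2, ← a1, hA] at e1 e2
    rw [hA] at sk
    have hCk : (C' k - C' h) * (C' k + C' h) = 0 := by linear_combination sk - sh
    rcases mul_eq_zero.1 hCk with h3 | h3
    · have h3 : C' k = C' h := by linear_combination h3
      rw [h3] at e1 e2
      left
      exact ⟨mul_left_cancel₀ hC (by linear_combination -e2), mul_left_cancel₀ hC (by linear_combination e1)⟩
    · have h3 : C' k = - C' h := by linear_combination h3
      rw [h3] at e1 e2
      right
      exact ⟨mul_left_cancel₀ hC (by linear_combination -e2), mul_left_cancel₀ hC (by linear_combination e1)⟩)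
  have hcN : ((N0f F).card : ℝ) = 2 * (Fintype.card F + 1) := by
    have : (N0f F).card = 2 * (Fintype.card F + 1) := by
      rw [← card_N0 hns h2 hodd, Nat.card_eq_fintype_card, Fintype.card_subtype]; rfl
    rw [this]; push_cast; rfl
  have hsub : conjSet (X0 F) ⊆ noEigSet F := by
    intro g hg
    obtain ⟨x, hx⟩ := mem_conjSet.1 hg
    obtain ⟨hx, hc⟩ := mem_X0.1 hx
    have hn : noEig g := by
      intro l hl
      rw [← tr2_conj x] at hl
      have hC : C' (x * g * x⁻¹) ≠ 0 := fun h0 => hc (T0_cen hx h0)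
      have := T0_sq hx
      unfold tr2 at hl
      rw [← hx.1] at hl
      generalize C' (x * g * x⁻¹) = c at *
      generalize A' (x * g * x⁻¹) = a at *
      apply hns ((l - a) / c)
      field_simp
      linear_combination hl + this
    simp [noEigSet, hn]
  have hle : ∑ g ∈ conjSet (X0 F), nz ρ g ≤ ∑ g ∈ noEigSet F, nz ρ g :=
    Finset.sum_le_sum_of_subset_of_nonneg hsub (fun g _ _ => nz_nonneg ρ g)
  rw [hcN, card_SL2] at hti
  have hq' : (3 : ℝ) ≤ Fintype.card F := by exact_mod_cast hq
  push_cast [show 1 ≤ Fintype.card F by omega] at hti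
  generalize (Fintype.card F : ℝ) = q at *
  have hpos : 0 < q * (q - 1) * (q + 1) := mul_pos (mul_pos (by linarith) (by linarith)) (by linarith)
  refine le_of_mul_le_mul_left ?_ hpos
  refine hti.trans ?_
  have := mul_le_mul_of_nonneg_left (hle.trans hs) (by linarith : (0:ℝ) ≤ 2 * (q + 1))
  refine this.trans (le_of_eq (by ring))

lemma sum_T0 (hns : ∀ x : F, x ^ 2 ≠ -1) (h2 : (2 : F) ≠ 0) (hodd : Fintype.card F % 2 = 1) (hq : 3 ≤ Fintype.card F) (hep : ep F = 2) (ρ : Representation ℂ (PG F) V)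
    (hs : ∑ g ∈ noEigSet F, nz (pull ρ (pr F)) g ≤ Fintype.card F * ((Fintype.card F : ℝ) - 1) * (Fintype.card F - 3)) :
    ∑ x : (T0 F).map (pr F), (if (x : PG F) = 1 then 0 else ‖tr (ρ x)‖ ^ 2) ≤ (Fintype.card F : ℝ) - 3 := by
  have h := sum_map (cen_T0 (F := F)) (fun x => (if x = 1 then 0 else ‖tr (ρ x)‖ ^ 2))
  have h' := sum_X0 hns h2 hodd hq _ hs
  have e : ∑ g ∈ X0 F, nz (pull ρ (pr F)) g = ∑ x : T0 F, (if pr F x = 1 then 0 else ‖tr (ρ (pr F x))‖ ^ 2) := by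
    have e1 : ∀ x : T0 F, (if pr F x = 1 then 0 else ‖tr (ρ (pr F x))‖ ^ 2) = (if ¬ pr F x = 1 then ‖tr (ρ (pr F x))‖ ^ 2 else 0) := by
      intro x; split_ifs <;> rfl
    rw [Finset.sum_congr rfl fun x _ => e1 x, ← Finset.sum_filter]
    refine Finset.sum_bij (fun g hg => ⟨g, (mem_X0.1 hg).1⟩) ?_ ?_ ?_ ?_
    · intro g hg
      rw [Finset.mem_filter]
      exact ⟨Finset.mem_univ _, fun h => (mem_X0.1 hg).2 (pr_eq_one.1 h)⟩
    · intro g _ k _ h; exact congrArg Subtype.val h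
    · rintro ⟨g, hg⟩ h
      rw [Finset.mem_filter] at h
      exact ⟨g, mem_X0.2 ⟨hg, fun hc => h.2 (pr_eq_one.2 hc)⟩, rfl⟩
    · intro g _; rfl
  rw [e, h, hep, nsmul_eq_mul] at h'
  push_cast at h'
  linarith
end
end SFP

namespace SFP
noncomputable section
set_option linter.unusedSectionVars false
variable {V : Type} [AddCommGroup V] [Module ℂ V] [FiniteDimensional ℂ V]
variable {F : Type} [Field F] [Fintype F]

lemma tr0_ti {i : F} (hi : i ^ 2 = -1) (h2 : (2 : F) ≠ 0) :
    ∃ b : Fˣ, b ^ 2 ≠ 1 ∧ tr2 (t b) = 0 := by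
  have h : i * (-i) = 1 := by linear_combination -hi
  refine ⟨Units.mkOfMulEqOne _ _ h, ?_, ?_⟩
  · intro h'
    have := congrArg Units.val h'
    rw [Units.val_pow_eq_pow_val, Units.val_one, Units.val_mkOfMulEqOne] at this
    apply h2
    linear_combination hi - this
  · simp [tr2, t]
    have : i⁻¹ = -i := (eq_inv_of_mul_eq_one_right h).symm
    rw [this]; ring

set_option maxHeartbeats 2000000 in
lemma main {p : ℕ} [hp : Fact p.Prime] (P : Sylow p (PG F)) (ρ : Representation ℂ (PG F) V)
    (h1 : NormOne ρ) :
    SumInducedProperty p (P : Subgroup (PG F)) (fun g => tr (ρ g)) (Module.finrank ℂ V) := by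
  by_cases hpd : ¬ p ∣ Module.finrank ℂ V
  · exact fin_coprime P ρ hpd
  rw [not_not] at hpd
  have hp2 := hp.1.two_le
  have hpn1 : ∀ n, p ∣ n → p ∣ n + 1 → False := fun n h h' => by
    have := (Nat.dvd_add_right h).1 h'
    have := Nat.le_of_dvd one_pos this
    omega
  have hpn2 : ∀ n, p ∣ n → p ∣ n + 2 → p = 2 := fun n h h' => by
    have := (Nat.dvd_add_right h).1 h'
    have := Nat.le_of_dvd two_pos this
    omega
  have hq2 : 2 ≤ Fintype.card F := Fintype.one_lt_card
  have hB := card_map (cen_B (F := F))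
  have hT := card_map (cen_T (F := F))
  rw [card_B] at hB
  rw [card_T] at hT
  have hG := card_PG (F := F)
  have hcase : (ep F = 1 ∧ Fintype.card F % 2 = 0) ∨ (ep F = 2 ∧ Fintype.card F % 2 = 1 ∧ (2 : F) ≠ 0) := by
    by_cases h : ringChar F = 2
    · left; exact ⟨by simp [ep, h], FiniteField.even_card_iff_char_two.1 h⟩
    · right; exact ⟨by simp [ep, h], FiniteField.odd_card_of_char_ne_two h, Ring.two_ne_zero h⟩
  have idxT : (Tsub F).index = Fintype.card F * (Fintype.card F + 1) := by
    have := idx (Tsub F)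
    rw [card_T] at this
    refine Nat.eq_of_mul_eq_mul_right (show 0 < Fintype.card F - 1 by omega) ?_
    rw [this]; ring
  have offc : ∀ b : Fˣ, t b ∉ Subgroup.center (SL2 F) → b ^ 2 ≠ 1 := fun b hb h =>
    hb (cen_iff.2 ⟨b, h, rfl⟩)
  rcases classify (normOne_pull h1) (hZ_pull ρ) with hd | ⟨hd, hv⟩ | ⟨hep, hd, hv⟩ | ⟨hd, hv, m, hm2, hm⟩ | ⟨s, hd, hs1, hs2, hv, hs⟩
  · rw [hd] at hpd
    have := Nat.le_of_dvd one_pos hpd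
    omega
  · rw [hd] at hpd
    refine fin_vanish P ρ ?_ (vanish_SL P ρ (Usub F) ?_ ?_)
    · rw [hd]
      rcases hcase with ⟨he, _⟩ | ⟨he, ho, _⟩
      · rw [he, one_mul] at hG
        exact ⟨_, by rw [hG, mul_assoc]⟩
      · obtain ⟨k, hk⟩ : ∃ k, Fintype.card F = 2 * k + 1 := ⟨Fintype.card F / 2, by omega⟩
        rw [he, hk] at hG
        rw [hk]
        refine ⟨k * (2 * k + 2), Nat.eq_of_mul_eq_mul_left two_pos ?_⟩
        rw [hG, Nat.add_sub_cancel]; ring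
    · have h := idx (Usub F)
      rw [card_U] at h
      obtain ⟨n, hn⟩ : ∃ n, Fintype.card F = n + 1 := ⟨Fintype.card F - 1, by omega⟩
      rw [hn] at h hpd
      have : (Usub F).index = n * (n + 2) := by
        refine Nat.eq_of_mul_eq_mul_right (show 0 < n + 1 by omega) ?_
        rw [h, Nat.add_sub_cancel]; ring
      rw [this]
      intro h'
      rcases hp.1.dvd_mul.1 h' with h' | h'
      · exact hpn1 _ h' hpd
      · exact hpn1 _ hpd h'
    · rintro h ⟨hA, hC, hD⟩ hc
      have e : h = u (B' h) := ext4 (by simp [u, hA]) (by simp [u]) (by simp [u, hC]) (by simp [u, hD])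
      rw [e]
      refine hv _ (fun h0 => hc ?_)
      rw [e, h0, u_zero]
      exact Subgroup.one_mem _
  · rcases hcase with ⟨he, _⟩ | ⟨he, ho, _⟩
    · omega
    obtain ⟨k, hk⟩ : ∃ k, Fintype.card F = 2 * k + 1 := ⟨Fintype.card F / 2, by omega⟩
    have hd' : Module.finrank ℂ V = k + 1 := by omega
    rw [he, hk, Nat.add_sub_cancel] at hG hB
    rw [hd'] at hpd
    refine fin_vanish P ρ ?_ (noEig_vanish P ρ hv ?_)
    · rw [hd']
      refine ⟨2 * k * (2 * k + 1), Nat.eq_of_mul_eq_mul_left two_pos ?_⟩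
      rw [hG]; ring
    · have : Nat.card ((Bsub F).map (pr F)) = (2 * k + 1) * k :=
        Nat.eq_of_mul_eq_mul_left two_pos (by rw [hB]; ring)
      rw [this]
      intro h'
      rcases hp.1.dvd_mul.1 h' with h' | h'
      · refine hpn1 _ h' ?_
        rw [show 2 * k + 1 + 1 = 2 * (k + 1) by ring]
        exact Dvd.dvd.mul_left hpd 2
      · exact hpn1 _ h' hpd
  · rw [hd] at hpd
    rcases hcase with ⟨he, h0⟩ | ⟨he, ho, h2⟩
    · rw [he, one_mul] at hG hB
      refine fin_vanish P ρ (by rw [hd, hG]; exact Dvd.intro_left _ rfl) (noEig_vanish P ρ hv ?_)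
      rw [hB]
      intro h'
      rcases hp.1.dvd_mul.1 h' with h' | h'
      · exact hpn1 _ h' hpd
      · have := hpn2 _ h' (by rw [show Fintype.card F - 1 + 2 = Fintype.card F + 1 by omega]; exact hpd)
        subst this
        omega
    obtain ⟨k, hk⟩ : ∃ k, Fintype.card F = 2 * k + 1 := ⟨Fintype.card F / 2, by omega⟩
    rw [he, hk, Nat.add_sub_cancel] at hG hB
    rw [he, hk, Nat.add_sub_cancel] at hT
    have hG' : Nat.card (PG F) = (2 * k + 1) * (2 * k * (k + 1)) :=
      Nat.eq_of_mul_eq_mul_left two_pos (by rw [hG]; ring)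
    have hB' : Nat.card ((Bsub F).map (pr F)) = (2 * k + 1) * k :=
        Nat.eq_of_mul_eq_mul_left two_pos (by rw [hB]; ring)
    have hT' : Nat.card ((Tsub F).map (pr F)) = k := by omega
    rw [hk] at hpd
    by_cases hpk : p ∣ k
    · have hp2 : p = 2 := hpn2 (2 * k) (Dvd.dvd.mul_left hpk 2) hpd
      subst hp2
      obtain ⟨j, rfl⟩ := hpk
      obtain ⟨i, hi⟩ : ∃ i : F, i ^ 2 = -1 := by
        have : IsSquare (-1 : F) := FiniteField.isSquare_neg_one_iff.2 (by omega)
        obtain ⟨i, hi⟩ := this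
        exact ⟨i, by rw [hi]; ring⟩
      obtain ⟨b, hb1, hb2⟩ := tr0_ti hi h2
      have hle : ∀ b : Fˣ, b ^ 2 ≠ 1 → ‖tr (pull ρ (pr F) (t b))‖ ≤ 2 := fun b hb => by
        rw [hm b hb]
        refine (norm_le_mult m _).trans (le_of_eq ?_)
        exact_mod_cast hm2
      refine fin_dihedral P ρ ((Tsub F).map (pr F)) ((Nsub F).map (pr F)) ?_ ?_ ?_ (tr (pull ρ (pr F) (ww F))) ?_ ?_ ?_ ?_ ?_ ?_
      · intro h
        have h := h.trans (Subgroup.index_map_dvd _ pr_surj)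
        have h' := idx (Nsub F)
        rw [card_N, hk, Nat.add_sub_cancel] at h'
        have : (Nsub F).index = (2 * (2 * j) + 1) * (2 * j + 1) :=
          Nat.eq_of_mul_eq_mul_right (show 0 < 2 * (2 * (2 * j)) by omega) (by rw [h']; ring)
        rw [this, hp.1.dvd_mul] at h
        omega
      · have : Function.Surjective (fun b : Fˣ => (⟨pr F (t b), Subgroup.mem_map_of_mem _ (mem_Tsub.2 ⟨b, rfl⟩)⟩ : (Tsub F).map (pr F))) := by
          rintro ⟨_, h, hh, rfl⟩
          obtain ⟨b, rfl⟩ := mem_Tsub.1 hh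
          exact ⟨b, rfl⟩
        exact isCyclic_of_surjective (MonoidHom.mk' _ (fun a b => Subtype.ext (by
          show pr F (t (a * b)) = pr F (t a) * pr F (t b)
          rw [t_mul, map_mul]))) this
      · rintro _ ⟨x, hx, rfl⟩ _ ⟨y, hy, rfl⟩ h1 h2
        rw [mem_map_iff cen_T] at h1 h2
        rw [← map_mul, mem_map_iff cen_T]
        rcases hx with hx | hx
        · exact absurd hx h1
        rcases hy with hy | hy
        · exact absurd hy h2
        constructor <;> simp [hx, hy]
      · rintro _ ⟨x, hx, rfl⟩ h1
        rw [mem_map_iff cen_T] at h1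
        have := mem_N_not_T hx h1
        exact ⟨tr0_sq this, tr0_tr ho (pull ρ (pr F)) this⟩
      · rw [← tr0_tr ho _ hb2]
        exact hle b hb1
      · rw [hT', hG']
        exact ⟨(2 * (2 * j) + 1) * (2 * j + 1), by ring⟩
      · rw [hG']
        exact ⟨(2 * (2 * j) + 1) * (j * (2 * j + 1)), by ring⟩
      · omega
      · have hb : ∀ x : (Tsub F).map (pr F), (if (x : PG F) = 1 then 0 else ‖tr (ρ x)‖) ≤ 2 := by
          rintro ⟨_, h, hh, rfl⟩
          obtain ⟨b, rfl⟩ := mem_Tsub.1 hh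
          split_ifs with h
          · norm_num
          · exact hle b (offc b (fun hc => h (pr_eq_one.2 hc)))
        refine lt_of_le_of_lt (Finset.sum_le_sum (g := fun _ => (2 : ℝ)) fun x _ => (le_trans (le_of_eq (by congr)) (hb x))) ?_
        rw [Finset.sum_const, Finset.card_univ, ← Nat.card_eq_fintype_card, hT', hd, hk]
        push_cast
        simp
        linarith
    · refine fin_vanish P ρ ?_ (noEig_vanish P ρ hv ?_)
      · rw [hd, hG', hk]
        exact ⟨(2 * k + 1) * k, by ring⟩
      · rw [hB']
        intro h'
        rcases hp.1.dvd_mul.1 h' with h' | h'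
        · exact hpn1 _ h' hpd
        · exact hpk h'
  · rcases eq_or_ne p 2 with hpe | hpo
    · subst hpe
      rcases hcase with ⟨he, h0⟩ | ⟨he, ho, h2⟩
      · rw [he] at hd hs2
        have : s = 1 := by omega
        subst this
        omega
      obtain ⟨k, hk⟩ : ∃ k, Fintype.card F = 2 * k + 1 := ⟨Fintype.card F / 2, by omega⟩
      rw [he, hk, Nat.add_sub_cancel] at hG hd
      have hG' : Nat.card (PG F) = (2 * k + 1) * (2 * k * (k + 1)) :=
        Nat.eq_of_mul_eq_mul_left two_pos (by rw [hG]; ring)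
      have hd' : Module.finrank ℂ V = s * k :=
        Nat.eq_of_mul_eq_mul_left two_pos (by rw [hd]; ring)
      rw [he] at hs2
      by_cases hk2 : k % 2 = 0
      · obtain ⟨i, hi⟩ : ∃ i : F, i ^ 2 = -1 := by
          have : IsSquare (-1 : F) := FiniteField.isSquare_neg_one_iff.2 (by omega)
          obtain ⟨i, hi⟩ := this
          exact ⟨i, by rw [hi]; ring⟩
        obtain ⟨b, hb1, hb2⟩ := tr0_ti hi h2
        refine fin_vanish P ρ ?_ (vanish_SL P ρ (Nsub F) ?_ ?_)
        · rw [hd', hG']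
          have : s = 1 ∨ s = 2 := by omega
          rcases this with rfl | rfl
          · exact ⟨(2 * k + 1) * (2 * (k + 1)), by ring⟩
          · exact ⟨(2 * k + 1) * ((k + 1)), by ring⟩
        · intro h
          have h' := idx (Nsub F)
          rw [card_N, hk, Nat.add_sub_cancel] at h'
          have : (Nsub F).index = (2 * k + 1) * (k + 1) :=
            Nat.eq_of_mul_eq_mul_right (show 0 < 2 * (2 * k) by omega) (by rw [h']; ring)
          rw [this, hp.1.dvd_mul] at h
          omega
        · intro h hh hc
          by_cases hT : h ∈ Tsub F
          · obtain ⟨c, rfl⟩ := mem_Tsub.1 hT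
            exact hv c (offc c hc)
          · rw [tr0_tr ho _ (mem_N_not_T hh hT), ← tr0_tr ho _ hb2]
            exact hv b hb1
      · have : s = 1 ∨ s = 2 := by omega
        rcases this with rfl | rfl
        · omega
        have hns : ∀ x : F, x ^ 2 ≠ -1 := by
          intro x hx
          have : IsSquare (-1 : F) := ⟨x, by rw [← hx]; ring⟩
          have := FiniteField.isSquare_neg_one_iff.1 this
          omega
        have hsT := sum_T0 hns h2 ho (by omega) he ρ (hs rfl)
        have hcT := card_map (cen_T0 (F := F))
        rw [card_T0 hns h2, he, hk] at hcT
        have hcT : Nat.card ((T0 F).map (pr F)) = k + 1 := by omega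
        have hcyc : IsCyclic ((T0 F).map (pr F)) := by
          have := cyc_T0 h2
          exact isCyclic_of_surjective _ ((pr F).subgroupMap_surjective (T0 F))
        have hd2 : Module.finrank ℂ V + 2 = 2 * (k + 1) := by omega
        have hsT' : ∑ x : (T0 F).map (pr F), (if (x : PG F) = 1 then 0 else ‖tr (ρ x)‖ ^ 2) ≤ 2 * ((k + 1 : ℕ) : ℝ) - 4 := by
          refine hsT.trans (le_of_eq ?_)
          rw [hk]; push_cast; ring
        have hv2 := pars' ρ _ hcyc (k + 1) hcT hd2 (by convert hsT') (pr F (ww F)) (Subgroup.mem_map_of_mem _ ww_T0)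
            (fun h => ww_cen (pr_eq_one.1 h))
        have hbb := hb_of ρ _ (k + 1) hcT (by omega) hd2 (by convert hsT')
        refine fin_dihedral P ρ ((T0 F).map (pr F)) ((N0 F).map (pr F)) ?_ hcyc ?_ (tr (pull ρ (pr F) (ww F))) ?_ ?_ ?_ ?_ ?_ ?_
        · intro h
          have h := h.trans (Subgroup.index_map_dvd _ pr_surj)
          have h' := idx (N0 F)
          rw [card_N0 hns h2 ho, hk, Nat.add_sub_cancel] at h'
          have : (N0 F).index = (2 * k + 1) * k :=
            Nat.eq_of_mul_eq_mul_right (show 0 < 2 * (2 * k + 1 + 1) by omega) (by rw [h']; ring)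
          rw [this, hp.1.dvd_mul] at h
          omega
        · rintro _ ⟨x, hx, rfl⟩ _ ⟨y, hy, rfl⟩ h1 h2
          rw [mem_map_iff cen_T0] at h1 h2
          rw [← map_mul, mem_map_iff cen_T0]
          exact T0_N0 x hx y hy h1 h2
        · rintro _ ⟨x, hx, rfl⟩ h1
          rw [mem_map_iff cen_T0] at h1
          have := mem_N0_not_T0 hx h1
          exact ⟨tr0_sq this, tr0_tr ho (pull ρ (pr F)) this⟩
        · exact hv2
        · rw [hcT, hG']
          exact ⟨(2 * k + 1) * k, by ring⟩
        · rw [hG']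
          obtain ⟨j, rfl⟩ : ∃ j, k = 2 * j + 1 := ⟨k / 2, by omega⟩
          exact ⟨(2 * (2 * j + 1) + 1) * ((2 * j + 1) * (j + 1)), by ring⟩
        · omega
        · exact hbb
    · have hq1 : p ∣ Fintype.card F - 1 := by
        have h : p ∣ s * (Fintype.card F - 1) := hd ▸ Dvd.dvd.mul_left hpd _
        rcases hp.1.dvd_mul.1 h with h | h
        · have := Nat.le_of_dvd (by omega) h
          have : ep F ≤ 2 := by rcases hcase with h | h <;> omega
          omega
        · exact h
      refine fin_vanish P ρ ?_ (vanish_SL P ρ (Tsub F) ?_ ?_)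
      · rcases hcase with ⟨he, h0⟩ | ⟨he, ho, h2⟩
        · rw [he] at hd hs2 hG
          have : s = 1 := by omega
          subst this
          have hd : Module.finrank ℂ V = Fintype.card F - 1 := by omega
          rw [one_mul] at hG
          rw [hd, hG]
          exact ⟨Fintype.card F * (Fintype.card F + 1), by ring⟩
        · obtain ⟨k, hk⟩ : ∃ k, Fintype.card F = 2 * k + 1 := ⟨Fintype.card F / 2, by omega⟩
          rw [he, hk, Nat.add_sub_cancel] at hG hd
          have hG' : Nat.card (PG F) = (2 * k + 1) * (2 * k * (k + 1)) :=
            Nat.eq_of_mul_eq_mul_left two_pos (by rw [hG]; ring)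
          have hd' : Module.finrank ℂ V = s * k :=
            Nat.eq_of_mul_eq_mul_left two_pos (by rw [hd]; ring)
          rw [he] at hs2
          rw [hd', hG']
          have : s = 1 ∨ s = 2 := by omega
          rcases this with rfl | rfl
          · exact ⟨(2 * k + 1) * (2 * (k + 1)), by ring⟩
          · exact ⟨(2 * k + 1) * ((k + 1)), by ring⟩
      · rw [idxT]
        intro h
        rcases hp.1.dvd_mul.1 h with h | h
        · exact hpn1 _ hq1 (by rw [show Fintype.card F - 1 + 1 = Fintype.card F by omega]; exact h)
        · exact hpo (hpn2 _ hq1 (by rw [show Fintype.card F - 1 + 2 = Fintype.card F + 1 by omega]; exact h))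
      · intro h hh hc
        obtain ⟨b, rfl⟩ := mem_Tsub.1 hh
        exact hv b (offc b hc)

end
end SFP
theorem strong_form_for_PSL2
    (q : ℕ) (hq : IsPrimePow q)
    (F : Type) [Field F] [Fintype F] (hF : Fintype.card F = q)
    (p : ℕ) [Fact p.Prime]
    (P : Sylow p (Matrix.SpecialLinearGroup (Fin 2) F ⧸
      Subgroup.center (Matrix.SpecialLinearGroup (Fin 2) F))) :
    ∀ (V : FDRep ℂ (Matrix.SpecialLinearGroup (Fin 2) F ⧸
        Subgroup.center (Matrix.SpecialLinearGroup (Fin 2) F))),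
      CategoryTheory.Simple V →
      SumInducedProperty p
        (P : Subgroup (Matrix.SpecialLinearGroup (Fin 2) F ⧸
          Subgroup.center (Matrix.SpecialLinearGroup (Fin 2) F)))
        V.character (Module.finrank ℂ V) := by
  intro V hV
  have h1 : SFP.NormOne V.ρ := by
    have := (FDRep.simple_iff_char_is_norm_one V).1 hV
    unfold SFP.NormOne
    rw [← Nat.card_eq_fintype_card]
    exact this
  exact SFP.main P V.ρ h1
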